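/- arXiv:2308.13748 — 2 statements merged into one kernel-verified Lean document; each statement's English description precedes it below -/
import Mathlib

section
/- For any continuous map f from the n-sphere S^n to R^n, there exists a point x in S^n such that f(x) = f(-x). -/
/-!
It suffices to find a zero of every continuous odd map `g : Sⁿ → ℝⁿ`, where `Sⁿ` may be taken to be
the boundary of the `ℓ¹` ball. Adding one cone at a time gives mod 2 chains `C₀, …, Cₙ` on `Sⁿ`, as
fine as we like, such that `C₀` is a point and `∂Cₖ₊₁ = Cₖ + a Cₖ` for the antipodal map `a`. The
sign `θⱼ` of the `j`-th component of `g` (ties being broken antisymmetrically) is a `0`-cochain with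
`θⱼ ∘ a = θⱼ + 1`, so that `⟨δ (θ ⌣ w), Cₖ₊₁⟩ = ⟨w, Cₖ⟩` for every `a`-invariant cocycle `w`. Hence
`δ (θ₁ ⌣ δ (θ₂ ⌣ ⋯))` takes the value `1` on `Cₙ`. If `g` had no zero, on every small simplex some
component of `g` would have constant sign, which would make this cocycle vanish there.
-/

open Metric Set

/-- Mod 2 chains of ordered simplices with vertices in `V`. A list of `k + 1` vertices is a
`k`-simplex, possibly degenerate; the empty list is the simplex of dimension `-1`, so that the
chain complex is augmented. -/
abbrev ModTwoChain (V : Type*) := List V →₀ ZMod 2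

namespace ModTwoChain

noncomputable section

variable {V W M : Type*}

/-- The chain consisting of a single simplex. -/
def simplex (l : List V) : ModTwoChain V := Finsupp.single l 1

/-- The linear map with prescribed values on simplices. -/
def lift [AddCommGroup M] [Module (ZMod 2) M] (F : List V → M) : ModTwoChain V →ₗ[ZMod 2] M :=
  Finsupp.linearCombination (ZMod 2) F

/-- Chains all of whose simplices belong to `s`. -/
def supportedOn (s : Set (List V)) : Submodule (ZMod 2) (ModTwoChain V) :=
  Finsupp.supported (ZMod 2) (ZMod 2) s

/-- Chains all of whose vertices belong to `S`. -/
def chainsIn (S : Set V) : Submodule (ZMod 2) (ModTwoChain V) :=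
  supportedOn {l | ∀ x ∈ l, x ∈ S}

section Linear

variable [AddCommGroup M] [Module (ZMod 2) M]

@[simp]
theorem lift_simplex (F : List V → M) (l : List V) : lift F (simplex l) = F l := by
  simp [lift, simplex]

theorem simplex_mem_supportedOn {s : Set (List V)} {l : List V} (hl : l ∈ s) :
    simplex l ∈ supportedOn s :=
  Finsupp.single_mem_supported _ _ hl

theorem supportedOn_mono {s t : Set (List V)} (h : s ⊆ t) : supportedOn s ≤ supportedOn t :=
  Finsupp.supported_mono h

theorem supportedOn_eq_span (s : Set (List V)) :
    supportedOn s = Submodule.span (ZMod 2) (simplex '' s) :=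
  Finsupp.supported_eq_span_single (ZMod 2) s

theorem apply_mem_of_forall_simplex {f : ModTwoChain V →ₗ[ZMod 2] M} {s : Set (List V)}
    {P : Submodule (ZMod 2) M} (h : ∀ l ∈ s, f (simplex l) ∈ P) {c : ModTwoChain V}
    (hc : c ∈ supportedOn s) : f c ∈ P := by
  rw [supportedOn_eq_span] at hc
  exact Submodule.span_le (p := P.comap f).2 (image_subset_iff.2 h) hc

theorem apply_eq_of_forall_simplex {f g : ModTwoChain V →ₗ[ZMod 2] M} {s : Set (List V)}
    (h : ∀ l ∈ s, f (simplex l) = g (simplex l)) {c : ModTwoChain V}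
    (hc : c ∈ supportedOn s) : f c = g c := by
  rw [supportedOn_eq_span] at hc
  exact LinearMap.eqOn_span (forall_mem_image.2 h) hc

theorem hom_ext {f g : ModTwoChain V →ₗ[ZMod 2] M}
    (h : ∀ l, f (simplex l) = g (simplex l)) : f = g :=
  Finsupp.lhom_ext' fun l ↦ LinearMap.ext_ring (h l)

end Linear

theorem simplex_mem_chainsIn {S : Set V} {l : List V} (hl : ∀ x ∈ l, x ∈ S) :
    simplex l ∈ chainsIn S :=
  simplex_mem_supportedOn hl

/-- The join of the vertex `v` with a chain. -/
def join (v : V) : ModTwoChain V →ₗ[ZMod 2] ModTwoChain V :=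
  lift fun l ↦ simplex (v :: l)

/-- The chain map induced by a map of vertices. -/
def map (f : V → W) : ModTwoChain V →ₗ[ZMod 2] ModTwoChain W :=
  lift fun l ↦ simplex (l.map f)

@[simp]
theorem join_simplex (v : V) (l : List V) : join v (simplex l) = simplex (v :: l) :=
  lift_simplex _ _

@[simp]
theorem map_simplex (f : V → W) (l : List V) : map f (simplex l) = simplex (l.map f) :=
  lift_simplex _ _

theorem map_join (f : V → W) (v : V) (c : ModTwoChain V) :
    map f (join v c) = join (f v) (map f c) := by
  suffices map f ∘ₗ join v = join (f v) ∘ₗ map f from LinearMap.congr_fun this c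
  exact hom_ext fun l ↦ by simp

theorem map_map {X : Type*} (g : W → X) (f : V → W) (c : ModTwoChain V) :
    map g (map f c) = map (g ∘ f) c := by
  suffices map g ∘ₗ map f = map (g ∘ f) from LinearMap.congr_fun this c
  exact hom_ext fun l ↦ by simp

@[simp]
theorem map_id (c : ModTwoChain V) : map id c = c := by
  suffices map id = LinearMap.id from LinearMap.congr_fun this c
  exact hom_ext fun l ↦ by simp

theorem induction {P : ModTwoChain V → Prop} (nil : P (simplex []))
    (add : ∀ c d, P c → P d → P (c + d)) (join : ∀ v c, P c → P (join v c))
    (c : ModTwoChain V) : P c := by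
  have h_simplex : ∀ l, P (simplex l) := fun l ↦ by
    induction l with
    | nil => exact nil
    | cons v l ih => simpa using join v _ ih
  have h_zero : P 0 := by simpa [ZModModule.add_self] using add _ _ nil nil
  induction c using Finsupp.induction_linear with
  | zero => exact h_zero
  | add c d hc hd => exact add c d hc hd
  | single l b =>
    obtain rfl | rfl : b = 0 ∨ b = 1 := by decide +revert
    · simpa using h_zero
    · exact h_simplex l

theorem join_mem_chainsIn {S : Set V} {v : V} (hv : v ∈ S) {c : ModTwoChain V}
    (hc : c ∈ chainsIn S) : join v c ∈ chainsIn S := by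
  refine apply_mem_of_forall_simplex (fun l hl ↦ ?_) hc
  rw [join_simplex]
  exact simplex_mem_chainsIn (List.forall_mem_cons.2 ⟨hv, hl⟩)

/-- The mod 2 boundary of a simplex. -/
def simplexBoundary : List V → ModTwoChain V
  | [] => 0
  | v :: l => simplex l + join v (simplexBoundary l)

/-- The mod 2 boundary operator. -/
def boundary : ModTwoChain V →ₗ[ZMod 2] ModTwoChain V :=
  lift simplexBoundary

@[simp]
theorem boundary_simplex_nil : boundary (simplex ([] : List V)) = 0 :=
  lift_simplex _ _

theorem boundary_simplex_cons (v : V) (l : List V) :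
    boundary (simplex (v :: l)) = simplex l + join v (boundary (simplex l)) := by
  simp only [boundary, lift_simplex, simplexBoundary]

theorem boundary_join (v : V) (c : ModTwoChain V) :
    boundary (join v c) = c + join v (boundary c) := by
  suffices boundary ∘ₗ join v = LinearMap.id + join v ∘ₗ boundary from LinearMap.congr_fun this c
  exact hom_ext fun l ↦ by simp [boundary_simplex_cons]

theorem boundary_boundary (c : ModTwoChain V) : boundary (boundary c) = 0 := by
  induction c using ModTwoChain.induction with
  | nil => simp
  | add c d hc hd => rw [map_add, map_add, hc, hd, add_zero]
  | join v c ih =>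
    rw [boundary_join, map_add, boundary_join, ih, map_zero, add_zero, ZModModule.add_self]

theorem boundary_map (f : V → W) (c : ModTwoChain V) :
    boundary (map f c) = map f (boundary c) := by
  induction c using ModTwoChain.induction with
  | nil => simp
  | add c d hc hd => simp only [map_add, hc, hd]
  | join v c ih => simp only [map_join, boundary_join, map_add, ih]

theorem boundary_mem_chainsIn {S : Set V} {c : ModTwoChain V} (hc : c ∈ chainsIn S) :
    boundary c ∈ chainsIn S := by
  refine apply_mem_of_forall_simplex (fun l hl ↦ ?_) hc
  induction l with
  | nil => simp
  | cons v l ih =>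
    obtain ⟨hv, hl⟩ := List.forall_mem_cons.1 hl
    rw [boundary_simplex_cons]
    exact add_mem (simplex_mem_chainsIn hl) (join_mem_chainsIn hv (ih hl))

/-- The image of a simplex under the prism operator: the usual triangulation of the prism with
bottom `f` and top `g`. -/
def simplexPrism (f g : V → W) : List V → ModTwoChain W
  | [] => 0
  | v :: l => simplex (f v :: g v :: l.map g) + join (f v) (simplexPrism f g l)

/-- The prism operator, a chain homotopy between `map f` and `map g`. -/
def prism (f g : V → W) : ModTwoChain V →ₗ[ZMod 2] ModTwoChain W :=
  lift (simplexPrism f g)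

@[simp]
theorem prism_simplex_nil (f g : V → W) : prism f g (simplex []) = 0 :=
  lift_simplex _ _

theorem prism_simplex_cons (f g : V → W) (v : V) (l : List V) :
    prism f g (simplex (v :: l)) =
      simplex (f v :: g v :: l.map g) + join (f v) (prism f g (simplex l)) := by
  simp only [prism, lift_simplex, simplexPrism]

theorem prism_join (f g : V → W) (v : V) (c : ModTwoChain V) :
    prism f g (join v c) = join (f v) (join (g v) (map g c)) + join (f v) (prism f g c) := by
  suffices prism f g ∘ₗ join v = join (f v) ∘ₗ join (g v) ∘ₗ map g + join (f v) ∘ₗ prism f g from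
    LinearMap.congr_fun this c
  exact hom_ext fun l ↦ by simp [prism_simplex_cons]

theorem boundary_prism (f g : V → W) (c : ModTwoChain V) :
    boundary (prism f g c) = map f c + map g c + prism f g (boundary c) := by
  induction c using ModTwoChain.induction with
  | nil => simp [ZModModule.add_self]
  | add c d hc hd =>
    simp only [map_add, hc, hd]
    abel
  | join v c ih =>
    have cancel := ZModModule.add_self (join (f v) (map g c))
    simp only [prism_join, map_join, boundary_join, map_add, ih, boundary_map]
    grind

theorem prism_simplex_mem_chainsIn {f g : V → W} {S : Set W} {l : List V}
    (hf : ∀ x ∈ l, f x ∈ S) (hg : ∀ x ∈ l, g x ∈ S) : prism f g (simplex l) ∈ chainsIn S := by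
  induction l with
  | nil => simp
  | cons v l ih =>
    obtain ⟨hfv, hfl⟩ := List.forall_mem_cons.1 hf
    rw [prism_simplex_cons]
    refine add_mem (simplex_mem_chainsIn (List.forall_mem_cons.2 ⟨hfv, ?_⟩))
      (join_mem_chainsIn hfv (ih hfl (List.forall_mem_cons.1 hg).2))
    rw [← List.map_cons]
    exact List.forall_mem_map.2 hg

/-- The stack of the `N` prisms between consecutive members of the sequence of maps `h`. -/
def prismStack (h : ℕ → V → W) (N : ℕ) : ModTwoChain V →ₗ[ZMod 2] ModTwoChain W :=
  ∑ i ∈ Finset.range N, prism (h i) (h (i + 1))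

theorem prismStack_succ (h : ℕ → V → W) (N : ℕ) :
    prismStack h (N + 1) = prismStack h N + prism (h N) (h (N + 1)) :=
  Finset.sum_range_succ _ _

theorem boundary_prismStack (h : ℕ → V → W) (N : ℕ) (c : ModTwoChain V) :
    boundary (prismStack h N c) = map (h 0) c + map (h N) c + prismStack h N (boundary c) := by
  induction N with
  | zero => simp [prismStack, ZModModule.add_self]
  | succ N ih =>
    have cancel := ZModModule.add_self (map (h N) c)
    simp only [prismStack_succ, LinearMap.add_apply, map_add, ih, boundary_prism]
    grind

section Obstruction

/-- The cap product with the `0`-cochain `θ`: each simplex is multiplied by the value of `θ` at its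
first vertex, and the empty simplex is sent to `0`. -/
def cap (θ : V → ZMod 2) : ModTwoChain V →ₗ[ZMod 2] ModTwoChain V :=
  lift fun
    | [] => 0
    | v :: l => θ v • simplex (v :: l)

@[simp]
theorem cap_simplex_nil (θ : V → ZMod 2) : cap θ (simplex []) = 0 :=
  lift_simplex _ _

@[simp]
theorem cap_simplex_cons (θ : V → ZMod 2) (v : V) (l : List V) :
    cap θ (simplex (v :: l)) = θ v • simplex (v :: l) :=
  lift_simplex _ _

theorem cap_mem_chainsIn (θ : V → ZMod 2) {S : Set V} {c : ModTwoChain V}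
    (hc : c ∈ chainsIn S) : cap θ c ∈ chainsIn S := by
  refine apply_mem_of_forall_simplex (fun l hl ↦ ?_) hc
  cases l with
  | nil => simp
  | cons v l =>
    rw [cap_simplex_cons]
    exact Submodule.smul_mem _ _ (simplex_mem_chainsIn hl)

/-- The coefficient of the empty simplex. -/
def emptyCoeff : ModTwoChain V →ₗ[ZMod 2] ZMod 2 :=
  lift fun
    | [] => 1
    | _ :: _ => 0

@[simp]
theorem emptyCoeff_simplex_nil : emptyCoeff (simplex ([] : List V)) = 1 :=
  lift_simplex _ _

@[simp]
theorem emptyCoeff_simplex_cons (v : V) (l : List V) : emptyCoeff (simplex (v :: l)) = 0 :=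
  lift_simplex _ _

theorem emptyCoeff_map (f : V → W) (c : ModTwoChain V) : emptyCoeff (map f c) = emptyCoeff c := by
  suffices emptyCoeff ∘ₗ map f = emptyCoeff from LinearMap.congr_fun this c
  refine hom_ext fun l ↦ ?_
  cases l <;> simp

/-- The cocycle `δ (θ₁ ⌣ δ (θ₂ ⌣ ⋯))` associated with a list of `0`-cochains. When the `θᵢ` change
by `1` under a free involution it descends to the quotient, where it represents a power of the class
of the double covering. For the empty list it is the augmentation of `0`-chains. -/
def obstructionCocycle : List (V → ZMod 2) → ModTwoChain V →ₗ[ZMod 2] ZMod 2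
  | [] => emptyCoeff ∘ₗ boundary
  | θ :: Θ => obstructionCocycle Θ ∘ₗ cap θ ∘ₗ boundary

theorem obstructionCocycle_nil (c : ModTwoChain V) :
    obstructionCocycle [] c = emptyCoeff (boundary c) :=
  rfl

theorem obstructionCocycle_cons (θ : V → ZMod 2) (Θ : List (V → ZMod 2)) (c : ModTwoChain V) :
    obstructionCocycle (θ :: Θ) c = obstructionCocycle Θ (cap θ (boundary c)) :=
  rfl

theorem obstructionCocycle_boundary (Θ : List (V → ZMod 2)) (c : ModTwoChain V) :
    obstructionCocycle Θ (boundary c) = 0 := by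
  cases Θ <;> simp [obstructionCocycle, boundary_boundary]

theorem obstructionCocycle_simplex_nil (Θ : List (V → ZMod 2)) :
    obstructionCocycle Θ (simplex []) = 0 := by
  cases Θ <;> simp [obstructionCocycle]

theorem apply_cap_map {w : ModTwoChain V →ₗ[ZMod 2] ZMod 2} {a : V → V} {θ : V → ZMod 2}
    {S : Set V} (hnil : w (simplex []) = 0) (hw : ∀ c ∈ chainsIn S, w (map a c) = w c)
    (hθ : ∀ x ∈ S, θ (a x) = θ x + 1) {c : ModTwoChain V} (hc : c ∈ chainsIn S) :
    w (cap θ (map a c)) = w (cap θ c) + w c := by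
  refine apply_eq_of_forall_simplex (f := w ∘ₗ cap θ ∘ₗ map a) (g := w ∘ₗ cap θ + w)
    (fun l hl ↦ ?_) hc
  cases l with
  | nil => simp [hnil]
  | cons v l =>
    have hwl := hw _ (simplex_mem_chainsIn hl)
    rw [map_simplex, List.map_cons] at hwl
    simp [hwl, hθ v (hl v List.mem_cons_self), add_mul]

theorem apply_cap_of_const {w : ModTwoChain V →ₗ[ZMod 2] ZMod 2} {θ : V → ZMod 2}
    {S : Set V} {b : ZMod 2} (hnil : w (simplex []) = 0) (hθ : ∀ x ∈ S, θ x = b)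
    {c : ModTwoChain V} (hc : c ∈ chainsIn S) : w (cap θ c) = b * w c := by
  refine apply_eq_of_forall_simplex (f := w ∘ₗ cap θ) (g := b • w) (fun l hl ↦ ?_) hc
  cases l with
  | nil => simp [hnil]
  | cons v l => simp [hθ v (hl v List.mem_cons_self)]

theorem obstructionCocycle_map {a : V → V} {S : Set V} {Θ : List (V → ZMod 2)}
    (hΘ : ∀ θ ∈ Θ, ∀ x ∈ S, θ (a x) = θ x + 1) :
    ∀ c ∈ chainsIn S, obstructionCocycle Θ (map a c) = obstructionCocycle Θ c := by
  induction Θ with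
  | nil =>
    intro c _
    rw [obstructionCocycle_nil, boundary_map, emptyCoeff_map, obstructionCocycle_nil]
  | cons θ Θ ih =>
    intro c hc
    obtain ⟨hθ, hΘ⟩ := List.forall_mem_cons.1 hΘ
    rw [obstructionCocycle_cons, boundary_map, apply_cap_map (obstructionCocycle_simplex_nil Θ)
      (ih hΘ) hθ (boundary_mem_chainsIn hc), obstructionCocycle_boundary, add_zero,
      obstructionCocycle_cons]

theorem obstructionCocycle_eq_zero_of_const {S : Set V} {Θ : List (V → ZMod 2)}
    {θ : V → ZMod 2} (hθΘ : θ ∈ Θ) {b : ZMod 2} (hθ : ∀ x ∈ S, θ x = b) :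
    ∀ c ∈ chainsIn S, obstructionCocycle Θ c = 0 := by
  induction hθΘ with
  | head Θ =>
    intro c hc
    rw [obstructionCocycle_cons, apply_cap_of_const (obstructionCocycle_simplex_nil Θ) hθ
      (boundary_mem_chainsIn hc), obstructionCocycle_boundary, mul_zero]
  | tail θ' _ ih =>
    intro c hc
    rw [obstructionCocycle_cons]
    exact ih _ (cap_mem_chainsIn θ' (boundary_mem_chainsIn hc))

theorem obstructionCocycle_eq_one {a : V → V} {S : Set V} {C : ℕ → ModTwoChain V}
    (hzero : boundary (C 0) = simplex [])
    (hsucc : ∀ k, boundary (C (k + 1)) = C k + map a (C k)) {Θ : List (V → ZMod 2)}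
    (hC : ∀ k < Θ.length, C k ∈ chainsIn S) (hΘ : ∀ θ ∈ Θ, ∀ x ∈ S, θ (a x) = θ x + 1) :
    obstructionCocycle Θ (C Θ.length) = 1 := by
  induction Θ with
  | nil => simp [obstructionCocycle, hzero]
  | cons θ Θ ih =>
    obtain ⟨hθ, hΘ⟩ := List.forall_mem_cons.1 hΘ
    rw [List.length_cons] at hC ⊢
    calc obstructionCocycle (θ :: Θ) (C (Θ.length + 1))
        = obstructionCocycle Θ (cap θ (C Θ.length)) +
            obstructionCocycle Θ (cap θ (map a (C Θ.length))) := by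
          rw [obstructionCocycle_cons, hsucc, map_add, map_add]
      _ = obstructionCocycle Θ (C Θ.length) := by
          rw [apply_cap_map (obstructionCocycle_simplex_nil Θ) (obstructionCocycle_map hΘ) hθ
            (hC _ (Nat.lt_succ_self _)), ← add_assoc, ZModModule.add_self, zero_add]
      _ = 1 := ih (fun k hk ↦ hC k (hk.trans (Nat.lt_succ_self _))) hΘ

end Obstruction

section Hemisphere

variable {E : Type*} [AddCommGroup E] [Module ℝ E]

/-- The cone with apex `p`, cut into `N` layers: the prism stack of the straight-line contraction
to `p`, sampled at the times `i / N`. -/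
def layeredCone (p : E) (N : ℕ) : ModTwoChain E →ₗ[ZMod 2] ModTwoChain E :=
  prismStack (fun i x ↦ AffineMap.lineMap x p ((i : ℝ) / N)) N

/-- A subdivided hemisphere of each dimension: starting from the point `p 0`, the next hemisphere is
the cone with apex `p (k + 1)` over the sphere formed by a hemisphere and its antipode. -/
def hemisphere (p : ℕ → E) (N : ℕ) : ℕ → ModTwoChain E
  | 0 => simplex [p 0]
  | k + 1 => layeredCone (p (k + 1)) N (hemisphere p N k + map Neg.neg (hemisphere p N k))

theorem boundary_layeredCone (p : E) {N : ℕ} (hN : N ≠ 0) (c : ModTwoChain E) :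
    boundary (layeredCone p N c) =
      c + map (Function.const E p) c + layeredCone p N (boundary c) := by
  have h_start : (fun x : E ↦ AffineMap.lineMap x p (((0 : ℕ) : ℝ) / N)) = id := by
    funext x
    simp
  have h_end : (fun x : E ↦ AffineMap.lineMap x p ((N : ℝ) / N)) = Function.const E p := by
    funext x
    simp [hN]
  rw [layeredCone, boundary_prismStack, h_start, h_end, map_id]

theorem boundary_layeredCone_antipodal (p : E) {N : ℕ} (hN : N ≠ 0) {c : ModTwoChain E}
    (hc : map Neg.neg (boundary c) = boundary c) :
    boundary (layeredCone p N (c + map Neg.neg c)) = c + map Neg.neg c := by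
  have h_cycle : boundary (c + map Neg.neg c) = 0 := by
    rw [map_add, boundary_map, hc, ZModModule.add_self]
  have h_collapse : map (Function.const E p) (c + map Neg.neg c) = 0 := by
    rw [map_add, map_map, Function.const_comp, ZModModule.add_self]
  rw [boundary_layeredCone p hN, h_cycle, h_collapse, map_zero, add_zero, add_zero]

theorem boundary_hemisphere_zero (p : ℕ → E) (N : ℕ) :
    boundary (hemisphere p N 0) = simplex [] := by
  simp [hemisphere, boundary_simplex_cons]

theorem map_neg_boundary_hemisphere (p : ℕ → E) {N : ℕ} (hN : N ≠ 0) (k : ℕ) :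
    map Neg.neg (boundary (hemisphere p N k)) = boundary (hemisphere p N k) := by
  induction k with
  | zero => simp [boundary_hemisphere_zero]
  | succ k ih =>
    rw [hemisphere, boundary_layeredCone_antipodal _ hN ih, map_add, map_map, neg_comp_neg, map_id,
      add_comm]

theorem boundary_hemisphere_succ (p : ℕ → E) {N : ℕ} (hN : N ≠ 0) (k : ℕ) :
    boundary (hemisphere p N (k + 1)) = hemisphere p N k + map Neg.neg (hemisphere p N k) :=
  boundary_layeredCone_antipodal _ hN (map_neg_boundary_hemisphere p hN k)

end Hemisphere

section Mesh

/-- The simplices with vertices in `S` and diameter at most `δ`. -/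
def smallSimplices [PseudoMetricSpace V] (S : Set V) (δ : ℝ) : Set (List V) :=
  {l | (∀ x ∈ l, x ∈ S) ∧ ∀ x ∈ l, ∀ y ∈ l, dist x y ≤ δ}

theorem chainsIn_le_smallSimplices [PseudoMetricSpace V] {S T : Set V} (hST : S ⊆ T) {δ : ℝ}
    (hδ : ∀ x ∈ S, ∀ y ∈ S, dist x y ≤ δ) : chainsIn S ≤ supportedOn (smallSimplices T δ) :=
  supportedOn_mono fun _ hl ↦
    ⟨fun x hx ↦ hST (hl x hx), fun x hx y hy ↦ hδ x (hl x hx) y (hl y hy)⟩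

theorem supportedOn_smallSimplices_le_chainsIn [PseudoMetricSpace V] {S T : Set V} (hST : S ⊆ T)
    (δ : ℝ) : supportedOn (smallSimplices S δ) ≤ chainsIn T :=
  supportedOn_mono fun _ hl x hx ↦ hST (hl.1 x hx)

theorem map_mem_smallSimplices [PseudoMetricSpace V] [PseudoMetricSpace W] {f : V → W}
    (hf : Isometry f) {S : Set V} {T : Set W} (hST : MapsTo f S T) {δ : ℝ} {c : ModTwoChain V}
    (hc : c ∈ supportedOn (smallSimplices S δ)) :
    map f c ∈ supportedOn (smallSimplices T δ) := by
  refine apply_mem_of_forall_simplex (fun l hl ↦ ?_) hc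
  rw [map_simplex]
  refine simplex_mem_supportedOn ⟨List.forall_mem_map.2 fun x hx ↦ hST (hl.1 x hx), ?_⟩
  simpa only [List.forall_mem_map, hf.dist_eq] using hl.2

theorem prismStack_mem_smallSimplices [PseudoMetricSpace V] [PseudoMetricSpace W]
    {h : ℕ → V → W} {N : ℕ} {S : Set V} {T : Set W} {η : ℝ} (hη : 0 ≤ η)
    (hST : ∀ i ≤ N, MapsTo (h i) S T)
    (h_dist : ∀ i ≤ N, ∀ j, ∀ x ∈ S, ∀ y ∈ S, dist (h i x) (h j y) ≤ dist x y + dist i j * η)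
    {δ : ℝ} {c : ModTwoChain V} (hc : c ∈ supportedOn (smallSimplices S δ)) :
    prismStack h N c ∈ supportedOn (smallSimplices T (δ + η)) := by
  rw [prismStack, LinearMap.sum_apply]
  refine Submodule.sum_mem _ fun i hi ↦ apply_mem_of_forall_simplex (fun l hl ↦ ?_) hc
  have h_le {j : ℕ} (hj : j ∈ Icc i (i + 1)) : j ≤ N := hj.2.trans (Finset.mem_range.1 hi)
  have h_step {j k : ℕ} (hj : j ∈ Icc i (i + 1)) (hk : k ∈ Icc i (i + 1)) : dist j k ≤ 1 := by
    have h_cast {m : ℕ} (hm : m ∈ Icc i (i + 1)) : (m : ℝ) ∈ Icc (i : ℝ) (i + 1) :=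
      ⟨mod_cast hm.1, mod_cast hm.2⟩
    simpa using Real.dist_le_of_mem_Icc (h_cast hj) (h_cast hk)
  have h_mem : prism (h i) (h (i + 1)) (simplex l) ∈
      chainsIn {y | ∃ x ∈ l, ∃ j ∈ Icc i (i + 1), h j x = y} :=
    prism_simplex_mem_chainsIn (fun x hx ↦ ⟨x, hx, i, by simp, rfl⟩)
      fun x hx ↦ ⟨x, hx, i + 1, by simp, rfl⟩
  refine chainsIn_le_smallSimplices ?_ ?_ h_mem
  · rintro _ ⟨x, hx, j, hj, rfl⟩
    exact hST j (h_le hj) (hl.1 x hx)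
  · rintro _ ⟨x, hx, j, hj, rfl⟩ _ ⟨y, hy, k, hk, rfl⟩
    calc dist (h j x) (h k y) ≤ dist x y + dist j k * η :=
          h_dist j (h_le hj) k x (hl.1 x hx) y (hl.1 y hy)
      _ ≤ δ + 1 * η := by
          gcongr
          exacts [hl.2 x hx y hy, h_step hj hk]
      _ = δ + η := by rw [one_mul]

variable {E : Type*} [NormedAddCommGroup E] [NormedSpace ℝ E]

theorem dist_lineMap_lineMap_le (x y p : E) {s t : ℝ} (hs : s ∈ Icc (0 : ℝ) 1) :
    dist (AffineMap.lineMap x p s) (AffineMap.lineMap y p t) ≤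
      dist x y + dist s t * dist y p := by
  have h_contract : dist (AffineMap.lineMap x p s) (AffineMap.lineMap y p s) ≤ dist x y := by
    have h_sub : (AffineMap.lineMap x p s : E) - AffineMap.lineMap y p s = (1 - s) • (x - y) := by
      simp only [AffineMap.lineMap_apply_module]
      module
    rw [dist_eq_norm, h_sub, norm_smul, Real.norm_of_nonneg (sub_nonneg.2 hs.2), dist_eq_norm]
    exact mul_le_of_le_one_left (norm_nonneg _) (sub_le_self _ hs.1)
  calc dist (AffineMap.lineMap x p s) (AffineMap.lineMap y p t)
      ≤ dist (AffineMap.lineMap x p s) (AffineMap.lineMap y p s) +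
          dist (AffineMap.lineMap y p s) (AffineMap.lineMap y p t) := dist_triangle _ _ _
    _ ≤ dist x y + dist s t * dist y p := by
        rw [dist_lineMap_lineMap]
        gcongr

theorem layeredCone_mem_smallSimplices {S T : Set E} {p : E} {D : ℝ} (hD₀ : 0 ≤ D)
    (hST : ∀ x ∈ S, ∀ t ∈ Icc (0 : ℝ) 1, AffineMap.lineMap x p t ∈ T)
    (hD : ∀ x ∈ S, dist x p ≤ D) (N : ℕ) {δ : ℝ} {c : ModTwoChain E}
    (hc : c ∈ supportedOn (smallSimplices S δ)) :
    layeredCone p N c ∈ supportedOn (smallSimplices T (δ + D / N)) := by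
  have h_time {i : ℕ} (hi : i ≤ N) : (i : ℝ) / N ∈ Icc (0 : ℝ) 1 :=
    ⟨by positivity, div_le_one_of_le₀ (mod_cast hi) (Nat.cast_nonneg N)⟩
  refine prismStack_mem_smallSimplices (by positivity) (fun i hi x hx ↦ hST x hx _ (h_time hi))
    (fun i hi j x _ y hy ↦ ?_) hc
  calc dist (AffineMap.lineMap x p ((i : ℝ) / N)) (AffineMap.lineMap y p ((j : ℝ) / N))
      ≤ dist x y + dist ((i : ℝ) / N) (j / N) * dist y p :=
        dist_lineMap_lineMap_le x y p (h_time hi)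
    _ = dist x y + dist i j * (dist y p / N) := by
        rw [Real.dist_eq, ← sub_div, abs_div, Nat.abs_cast, ← Nat.dist_eq]
        ring
    _ ≤ dist x y + dist i j * (D / N) := by
        gcongr
        exact hD y hy

theorem hemisphere_mem_smallSimplices {p : ℕ → E} {S : ℕ → Set E} {n : ℕ} {D : ℝ} (hD₀ : 0 ≤ D)
    (hp : p 0 ∈ S 0) (h_neg : ∀ k, MapsTo Neg.neg (S k) (S k))
    (h_cone : ∀ k < n, ∀ x ∈ S k, ∀ t ∈ Icc (0 : ℝ) 1,
      AffineMap.lineMap x (p (k + 1)) t ∈ S (k + 1))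
    (hD : ∀ k, ∀ x ∈ S k, dist x (p (k + 1)) ≤ D) (N : ℕ) {k : ℕ} (hk : k ≤ n) :
    hemisphere p N k ∈ supportedOn (smallSimplices (S k) (k * (D / N))) := by
  induction k with
  | zero => exact simplex_mem_supportedOn (by simpa [smallSimplices] using hp)
  | succ k ih =>
    have h_mem := ih (Nat.le_of_succ_le hk)
    rw [hemisphere, Nat.cast_succ, add_one_mul]
    exact layeredCone_mem_smallSimplices hD₀ (h_cone k hk) (hD k) N
      (add_mem h_mem (map_mem_smallSimplices isometry_neg (h_neg k) h_mem))

end Mesh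

end

end ModTwoChain

/-- The unit sphere of the span of the first `k + 1` basis vectors in `ℝ^(n + 1)` with the `ℓ¹`
norm, that is, the boundary of a cross-polytope. -/
def l1Sphere (n k : ℕ) : Set (PiLp 1 fun _ : Fin (n + 1) ↦ ℝ) :=
  {x | ‖x‖ = 1 ∧ ∀ j : Fin (n + 1), k < j → x j = 0}

namespace l1Sphere

/-- The basis vectors of `ℝ^(n + 1)`, indexed cyclically by the natural numbers; they are the apexes
of the hemispheres of `l1Sphere n n`. -/
noncomputable def apex (n k : ℕ) : PiLp 1 fun _ : Fin (n + 1) ↦ ℝ :=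
  PiLp.single 1 (Fin.ofNat (n + 1) k) 1

theorem subset_sphere (n k : ℕ) : l1Sphere n k ⊆ sphere 0 1 :=
  fun _ hx ↦ mem_sphere_zero_iff_norm.2 hx.1

theorem neg_mapsTo (n k : ℕ) : MapsTo Neg.neg (l1Sphere n k) (l1Sphere n k) :=
  fun x hx ↦ ⟨by rw [norm_neg, hx.1], fun j hj ↦ by simp [hx.2 j hj]⟩

theorem apex_zero_mem (n : ℕ) : apex n 0 ∈ l1Sphere n 0 :=
  ⟨by simp [apex], fun j hj ↦ by simp [apex, Fin.pos_iff_ne_zero.1 hj]⟩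

theorem dist_apex_le {n k : ℕ} {x : PiLp 1 fun _ : Fin (n + 1) ↦ ℝ} (hx : x ∈ l1Sphere n k)
    (m : ℕ) : dist x (apex n m) ≤ 2 := by
  calc dist x (apex n m) ≤ ‖x‖ + ‖apex n m‖ := dist_le_norm_add_norm _ _
    _ = 2 := by
      rw [hx.1, apex, PiLp.norm_single, norm_one]
      norm_num

theorem norm_lineMap_single {ι : Type*} [Fintype ι] [DecidableEq ι] {x : PiLp 1 fun _ : ι ↦ ℝ}
    {i : ι} (hi : x i = 0) {t : ℝ} (ht : t ∈ Icc (0 : ℝ) 1) :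
    ‖(AffineMap.lineMap x (PiLp.single 1 i 1) t : PiLp 1 fun _ : ι ↦ ℝ)‖ = (1 - t) * ‖x‖ + t := by
  have h_coord (j : ι) : ‖(AffineMap.lineMap x (PiLp.single 1 i 1) t : PiLp 1 fun _ : ι ↦ ℝ) j‖ =
      (1 - t) * ‖x j‖ + if j = i then t else 0 := by
    have h_nonneg : |1 - t| = 1 - t := abs_of_nonneg (sub_nonneg.2 ht.2)
    rcases eq_or_ne j i with rfl | hj
    · simp [AffineMap.lineMap_apply_module, hi, abs_of_nonneg ht.1]
    · simp [AffineMap.lineMap_apply_module, hj, h_nonneg]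
  simp [PiLp.norm_eq_of_L1, h_coord, Finset.sum_add_distrib, Finset.mul_sum]

theorem lineMap_apex_mem {n k : ℕ} (hk : k < n) {x : PiLp 1 fun _ : Fin (n + 1) ↦ ℝ}
    (hx : x ∈ l1Sphere n k) {t : ℝ} (ht : t ∈ Icc (0 : ℝ) 1) :
    AffineMap.lineMap x (apex n (k + 1)) t ∈ l1Sphere n (k + 1) := by
  have h_val : (Fin.ofNat (n + 1) (k + 1) : ℕ) = k + 1 := Nat.mod_eq_of_lt (by lia)
  refine ⟨?_, fun j hj ↦ ?_⟩
  · rw [apex, norm_lineMap_single (hx.2 _ (h_val.symm ▸ k.lt_succ_self)) ht, hx.1]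
    ring
  · have hj_ne : j ≠ Fin.ofNat (n + 1) (k + 1) := fun h ↦ hj.ne' (h ▸ h_val)
    simp [AffineMap.lineMap_apply_module, apex, hx.2 j (Nat.lt_of_succ_lt hj), hj_ne,
      -Fin.ofNat_eq_cast]

theorem hemisphere_mem {n k : ℕ} (hk : k ≤ n) (N : ℕ) :
    ModTwoChain.hemisphere (apex n) N k ∈
      ModTwoChain.supportedOn (ModTwoChain.smallSimplices (l1Sphere n k) (k * (2 / N))) :=
  ModTwoChain.hemisphere_mem_smallSimplices zero_le_two (apex_zero_mem n) (neg_mapsTo n)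
    (fun _ hj _ hx _ ht ↦ lineMap_apex_mem hj hx ht) (fun _ _ hx ↦ dist_apex_le hx _) N hk

end l1Sphere

section Sign

variable {G : Type*} [AddCommGroup G] [LinearOrder G]

open scoped Classical in
/-- The sign of an element of an ordered group, as an element of `ZMod 2`; it is only meaningful
away from `0`. -/
noncomputable def signBit (x : G) : ZMod 2 := if 0 < x then 1 else 0

theorem signBit_neg [IsOrderedAddMonoid G] {x : G} (hx : x ≠ 0) :
    signBit (-x) = signBit x + 1 := by
  rcases hx.lt_or_gt with h | h
  · simp [signBit, h, h.not_gt]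
  · simp [signBit, h, h.not_gt, CharTwo.add_self_eq_zero]

/-- The sign of the `j`-th component of `g x`, ties being broken by the lexicographic sign of
`x`. -/
noncomputable def componentSign {ι κ : Type*} [LinearOrder κ] [WellFoundedLT κ]
    (g : (PiLp 1 fun _ : κ ↦ ℝ) → ι → ℝ) (j : ι) (x : PiLp 1 fun _ : κ ↦ ℝ) : ZMod 2 :=
  signBit (toLex (g x j, toLex (WithLp.ofLp x)))

variable {ι κ : Type*} [LinearOrder κ] [WellFoundedLT κ]
  {g : (PiLp 1 fun _ : κ ↦ ℝ) → ι → ℝ} {j : ι} {x : PiLp 1 fun _ : κ ↦ ℝ}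

theorem componentSign_neg (hg : g (-x) = -g x) (hx : x ≠ 0) :
    componentSign g j (-x) = componentSign g j x + 1 := by
  have h_ne : toLex (g x j, toLex (WithLp.ofLp x)) ≠ 0 := fun h ↦ hx (by
    have := congrArg Prod.snd (congrArg ofLex h)
    simpa using this)
  rw [componentSign, hg]
  exact signBit_neg h_ne

theorem componentSign_of_pos (h : 0 < g x j) : componentSign g j x = 1 :=
  if_pos (Prod.Lex.toLex_lt_toLex.2 (.inl h))

theorem componentSign_of_neg (h : g x j < 0) : componentSign g j x = 0 := by
  have h_neg : toLex (g x j, toLex (WithLp.ofLp x)) < 0 := Prod.Lex.toLex_lt_toLex.2 (.inl h)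
  exact if_neg h_neg.not_gt

end Sign

theorem exists_component_sign_const {V ι : Type*} [Fintype ι] {g : V → ι → ℝ} {T : Set V} {v : V}
    {ε : ℝ} (hε : 0 < ε) (hv : ε ≤ ‖g v‖) (h_near : ∀ x ∈ T, dist (g x) (g v) < ε) :
    ∃ j, (∀ x ∈ T, 0 < g x j) ∨ ∀ x ∈ T, g x j < 0 := by
  obtain ⟨j, hj⟩ : ∃ j, ε ≤ |g v j| := by
    contrapose! hv
    exact (pi_norm_lt_iff hε).2 hv
  have h_coord (x : V) (hx : x ∈ T) : |g x j - g v j| < ε :=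
    (dist_le_pi_dist (g x) (g v) j).trans_lt (h_near x hx)
  refine ⟨j, (le_abs.1 hj).imp (fun h x hx ↦ ?_) fun h x hx ↦ ?_⟩
  · linarith [(abs_lt.1 (h_coord x hx)).1]
  · linarith [(abs_lt.1 (h_coord x hx)).2]

section OddMap

variable {n m : ℕ} {g : (PiLp 1 fun _ : Fin (n + 1) ↦ ℝ) → Fin m → ℝ}

theorem obstructionCocycle_componentSign_eq_zero {S : Set (PiLp 1 fun _ : Fin (n + 1) ↦ ℝ)}
    {ε δ : ℝ} (hε : 0 < ε) (hg : ∀ x ∈ S, ε ≤ ‖g x‖)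
    (hδ : ∀ x ∈ S, ∀ y ∈ S, dist x y ≤ δ → dist (g x) (g y) < ε)
    {c : ModTwoChain (PiLp 1 fun _ : Fin (n + 1) ↦ ℝ)}
    (hc : c ∈ ModTwoChain.supportedOn (ModTwoChain.smallSimplices S δ)) :
    ModTwoChain.obstructionCocycle (List.ofFn (componentSign g)) c = 0 := by
  refine ModTwoChain.apply_eq_of_forall_simplex (g := 0) (fun l hl ↦ ?_) hc
  obtain ⟨h_mem, h_diam⟩ := hl
  cases l with
  | nil => exact ModTwoChain.obstructionCocycle_simplex_nil _
  | cons v l =>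
    have hv : v ∈ v :: l := List.mem_cons_self
    obtain ⟨j, hj⟩ := exists_component_sign_const (T := {x | x ∈ v :: l}) hε (hg v (h_mem v hv))
      fun x hx ↦ hδ x (h_mem x hx) v (h_mem v hv) (h_diam x hx v hv)
    obtain ⟨b, hb⟩ : ∃ b, ∀ x ∈ {x | x ∈ v :: l}, componentSign g j x = b :=
      hj.elim (fun h ↦ ⟨1, fun x hx ↦ componentSign_of_pos (h x hx)⟩)
        fun h ↦ ⟨0, fun x hx ↦ componentSign_of_neg (h x hx)⟩
    exact ModTwoChain.obstructionCocycle_eq_zero_of_const (List.mem_ofFn.2 ⟨j, rfl⟩) hb _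
      (ModTwoChain.simplex_mem_chainsIn fun _ ↦ id)

theorem obstructionCocycle_hemisphere_eq_one (hodd : ∀ x ∈ sphere 0 1, g (-x) = -g x)
    (hm : m ≤ n) {N : ℕ} (hN : N ≠ 0) :
    ModTwoChain.obstructionCocycle (List.ofFn (componentSign g))
      (ModTwoChain.hemisphere (l1Sphere.apex n) N m) = 1 := by
  have h_length : (List.ofFn (componentSign g)).length = m := List.length_ofFn
  have h_sphere (k : ℕ) (hk : k < (List.ofFn (componentSign g)).length) :
      ModTwoChain.hemisphere (l1Sphere.apex n) N k ∈ ModTwoChain.chainsIn (sphere 0 1) :=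
    ModTwoChain.supportedOn_smallSimplices_le_chainsIn (l1Sphere.subset_sphere n k) _
      (l1Sphere.hemisphere_mem (hk.le.trans (h_length.trans_le hm)) N)
  have h_sign (θ) (hθ : θ ∈ List.ofFn (componentSign g)) (x) (hx : x ∈ sphere 0 1) :
      θ (-x) = θ x + 1 := by
    obtain ⟨j, rfl⟩ := List.mem_ofFn.1 hθ
    exact componentSign_neg (hodd x hx) (ne_of_mem_sphere hx one_ne_zero)
  have h_one := ModTwoChain.obstructionCocycle_eq_one
    (ModTwoChain.boundary_hemisphere_zero (l1Sphere.apex n) N)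
    (ModTwoChain.boundary_hemisphere_succ _ hN) h_sphere h_sign
  rwa [h_length] at h_one

theorem exists_eq_zero_of_odd {g : (PiLp 1 fun _ : Fin (n + 1) ↦ ℝ) → Fin n → ℝ}
    (hg : ContinuousOn g (sphere 0 1)) (hodd : ∀ x ∈ sphere 0 1, g (-x) = -g x) :
    ∃ x ∈ sphere 0 1, g x = 0 := by
  by_contra! h_ne
  obtain ⟨z, hz, hz_min⟩ := (isCompact_sphere (0 : PiLp 1 fun _ : Fin (n + 1) ↦ ℝ) 1).exists_isMinOn
    (NormedSpace.sphere_nonempty.2 zero_le_one) hg.norm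
  obtain ⟨δ, hδ₀, hδ⟩ := Metric.uniformContinuousOn_iff.1
    ((isCompact_sphere _ _).uniformContinuousOn_of_continuous hg) ‖g z‖ (norm_pos_iff.2 (h_ne z hz))
  obtain ⟨N, hN, hN_small⟩ : ∃ N : ℕ, N ≠ 0 ∧ n * (2 / N : ℝ) < δ := by
    obtain ⟨N, hN⟩ := exists_nat_gt (n * 2 / δ)
    have hN₀ : (0 : ℝ) < N := lt_of_le_of_lt (by positivity) hN
    refine ⟨N, mod_cast hN₀.ne', ?_⟩
    rwa [← mul_div_assoc, div_lt_comm₀ hN₀ hδ₀]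
  have h_zero := obstructionCocycle_componentSign_eq_zero (norm_pos_iff.2 (h_ne z hz))
    (fun x hx ↦ hz_min (l1Sphere.subset_sphere n n hx))
    (fun x hx y hy hxy ↦ hδ x (l1Sphere.subset_sphere n n hx) y (l1Sphere.subset_sphere n n hy)
      (hxy.trans_lt hN_small)) (l1Sphere.hemisphere_mem le_rfl N)
  exact one_ne_zero ((obstructionCocycle_hemisphere_eq_one hodd le_rfl hN).symm.trans h_zero)

end OddMap

theorem exists_odd_map_sphere {E : Type*} [NormedAddCommGroup E] [NormedSpace ℝ E] {n : ℕ}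
    (hn : (n : Cardinal) < Module.rank ℝ E) :
    ∃ φ : (PiLp 1 fun _ : Fin (n + 1) ↦ ℝ) → E, ContinuousOn φ (sphere 0 1) ∧
      MapsTo φ (sphere 0 1) (sphere 0 1) ∧ ∀ x, φ (-x) = -φ x := by
  have h_succ : ((n + 1 : ℕ) : Cardinal) ≤ Module.rank ℝ E := by
    rw [Nat.cast_succ]
    exact Cardinal.add_one_le_of_lt hn
  obtain ⟨L, hL⟩ := Module.le_rank_iff_exists_linearMap.1 h_succ
  let T : (PiLp 1 fun _ : Fin (n + 1) ↦ ℝ) →ₗ[ℝ] E := L ∘ₗ (WithLp.linearEquiv 1 ℝ _).toLinearMap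
  have hT : Continuous T := T.continuous_of_finiteDimensional
  have hT_inj : Function.Injective T := hL.comp (WithLp.linearEquiv 1 ℝ _).injective
  have hT_ne {x} (hx : x ∈ sphere (0 : PiLp 1 fun _ : Fin (n + 1) ↦ ℝ) 1) : T x ≠ 0 :=
    (map_ne_zero_iff T hT_inj).2 (ne_of_mem_sphere hx one_ne_zero)
  refine ⟨fun x ↦ NormedSpace.normalize (T x), ?_, fun x hx ↦ ?_, fun x ↦ ?_⟩
  · exact (hT.norm.continuousOn.inv₀ fun x hx ↦ norm_ne_zero_iff.2 (hT_ne hx)).smul hT.continuousOn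
  · exact mem_sphere_zero_iff_norm.2 (NormedSpace.norm_normalize (hT_ne hx))
  · simp only [map_neg, NormedSpace.normalize_neg]

theorem borsuk_ulam_general {E F : Type*} [NormedAddCommGroup E] [NormedSpace ℝ E]
    [NormedAddCommGroup F] [NormedSpace ℝ F] [FiniteDimensional ℝ F]
    (h_rank : (Module.finrank ℝ F : Cardinal) < Module.rank ℝ E) {f : E → F}
    (hf : ContinuousOn f (sphere 0 1)) : ∃ x ∈ sphere 0 1, f x = f (-x) := by
  obtain ⟨φ, hφ, hφ_sphere, hφ_neg⟩ := exists_odd_map_sphere h_rank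
  let coords : F ≃L[ℝ] (Fin (Module.finrank ℝ F) → ℝ) := (Module.finBasis ℝ F).equivFunL
  have h_cont : ContinuousOn (fun x ↦ coords (f (φ x) - f (-φ x))) (sphere 0 1) :=
    coords.continuous.comp_continuousOn <| (hf.comp hφ hφ_sphere).sub <|
      hf.comp hφ.neg fun x hx ↦ by simpa using hφ_sphere hx
  have h_odd (x) (_ : x ∈ sphere 0 1) :
      coords (f (φ (-x)) - f (-φ (-x))) = -coords (f (φ x) - f (-φ x)) := by
    rw [hφ_neg, neg_neg, ← map_neg, neg_sub]
  obtain ⟨x, hx, hx_zero⟩ := exists_eq_zero_of_odd h_cont h_odd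
  exact ⟨φ x, hφ_sphere hx, sub_eq_zero.1 ((map_eq_zero_iff coords coords.injective).1 hx_zero)⟩

theorem borsuk_ulam (n : ℕ)
    (f : EuclideanSpace ℝ (Fin (n + 1)) → EuclideanSpace ℝ (Fin n))
    (hf : ContinuousOn f (Metric.sphere (0 : EuclideanSpace ℝ (Fin (n + 1))) 1)) :
    ∃ x ∈ Metric.sphere (0 : EuclideanSpace ℝ (Fin (n + 1))) 1, f x = f (-x) :=
  borsuk_ulam_general (by simp [← Module.finrank_eq_rank]) hf
end

section
/- Let A_i ⊆ R^n (i = 1,...,n) be compact strictly convex sets with nonempty interior, Q_i nonsingular n×n matrices, and f_i(x, u) = ⟨u', Q_i x⟩ where u' is the projection of u ∈ S^n to its first n coordinates. Then there exists u ∈ S^n such that for every i, both A_i ∩ H_u^+ and A_i ∩ H_u^− are nonempty and max_{x ∈ A_i ∩ H_u^+} f_i(x,u) − min_{x ∈ A_i ∩ H_u^+} f_i(x,u) = max_{x ∈ A_i ∩ H_u^−} f_i(x,u) − min_{x ∈ A_i ∩ H_u^−} f_i(x,u). -/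
/-- The closed upper half-space `H_u^+`. -/
def Hplus (n : ℕ) (u : EuclideanSpace ℝ (Fin (n + 1))) : Set (EuclideanSpace ℝ (Fin n)) :=
  {x | (∑ i : Fin n, u (Fin.castSucc i) * x i) ≥ u (Fin.last n)}

/-- The closed lower half-space `H_u^-`. -/
def Hminus (n : ℕ) (u : EuclideanSpace ℝ (Fin (n + 1))) : Set (EuclideanSpace ℝ (Fin n)) :=
  {x | (∑ i : Fin n, u (Fin.castSucc i) * x i) ≤ u (Fin.last n)}

/-- `f_i(x,u) = ⟨u', Q_i x⟩` for a matrix `Q_i`. -/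
def fQ (n : ℕ) (Q : Matrix (Fin n) (Fin n) ℝ)
    (x : EuclideanSpace ℝ (Fin n)) (u : EuclideanSpace ℝ (Fin (n + 1))) : ℝ :=
  ∑ j : Fin n, u (Fin.castSucc j) * Q.mulVec x j

/-! Let `δp₁ ⌣ ⋯ ⌣ δpₙ` be the mod 2 cup product of the coboundaries of odd labels of nonzero
vectors, that is, labels with `p (-x) = p x + 1`. Applying Stokes' formula to a hemisphere of an
arbitrarily fine subdivision of the boundary of a cross-polytope, then to a hemisphere of its
equator, and so on, one finds that this product evaluates to `1` on a hemisphere. Hence it is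
nonzero on some small simplex, on which none of the labels is then constant. So `n` open sets of an
`n`-sphere, each disjoint from its antipode, do not cover the sphere together with their antipodes:
otherwise let `pᵢ` be `1` on the `i`-th set and `0` on its antipode.

This is applied to the sets of those `u` for which the `i`-th objective varies strictly more over
the upper part of `Aᵢ` than over the lower part. They are open: by strict convexity, the points of
the upper part realising the larger variation may be moved off the hyperplane. -/

open scoped Topology

namespace BorsukUlam

/-- Mod 2 cochains on ordered simplices, a simplex being the list of its vertices. -/
abbrev Cochain (X : Type*) := List X → ZMod 2

section Cochains

variable {X Y : Type*}

/-- The simplicial coboundary `δ`. -/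
def coboundary : Cochain X →ₗ[ZMod 2] Cochain X where
  toFun F l := ∑ i : Fin l.length, F (l.eraseIdx i)
  map_add' F G := funext fun l => by simp [Finset.sum_add_distrib]
  map_smul' c F := funext fun l => by simp [Finset.mul_sum]

/-- Partial evaluation of a cochain at the first vertex of a simplex. -/
def link (v : X) (F : Cochain X) : Cochain X := fun l => F (v :: l)

theorem link_coboundary (v : X) (F : Cochain X) :
    link v (coboundary F) = F + coboundary (link v F) := by
  funext l
  simp [link, coboundary, Fin.sum_univ_succ]

theorem coboundary_nil (F : Cochain X) : coboundary F [] = 0 := rfl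

theorem coboundary_cons (F : Cochain X) (v : X) (l : List X) :
    coboundary F (v :: l) = F l + coboundary (link v F) l :=
  congrFun (link_coboundary v F) l

theorem coboundary_congr {F G : Cochain X} {l : List X}
    (h : ∀ m, m.Sublist l → m.length + 1 = l.length → F m = G m) :
    coboundary F l = coboundary G l := by
  change ∑ i : Fin l.length, _ = ∑ i : Fin l.length, _
  exact Finset.sum_congr rfl fun i _ =>
    h _ (List.eraseIdx_sublist l i) (List.length_eraseIdx_add_one i.isLt)

theorem coboundary_coboundary (F : Cochain X) : coboundary (coboundary F) = 0 := by
  funext l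
  induction l generalizing F with
  | nil => rfl
  | cons v l ih =>
    rw [coboundary_cons, link_coboundary, map_add, Pi.add_apply, ih, Pi.zero_apply, add_zero,
      Pi.zero_apply, CharTwo.add_self_eq_zero]

theorem coboundary_comp_map (f : X → Y) (F : Cochain Y) :
    coboundary (F ∘ List.map f) = coboundary F ∘ List.map f := by
  funext l
  induction l generalizing F with
  | nil => rfl
  | cons v l ih =>
    rw [Function.comp_apply, List.map_cons, coboundary_cons, coboundary_cons]
    exact congrArg _ (ih (link (f v) F))

/-- The cup product `p ⌣ F` of a `0`-cochain `p` with `F`. -/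
def vertexCup (p : X → ZMod 2) (F : Cochain X) : Cochain X
  | [] => 0
  | v :: l => p v * F (v :: l)

/-- The cup product `δp₁ ⌣ ⋯ ⌣ δpₖ` of coboundaries of `0`-cochains, encoded as
`δ(p₁ ⌣ δp₂ ⌣ ⋯ ⌣ δpₖ)`. The empty product is the unit `0`-cochain. -/
def cupCoboundaries : List (X → ZMod 2) → Cochain X
  | [] => fun l => if l.length = 1 then 1 else 0
  | p :: ps => coboundary (vertexCup p (cupCoboundaries ps))

theorem cupCoboundaries_nil_right (ps : List (X → ZMod 2)) : cupCoboundaries ps [] = 0 := by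
  cases ps <;> rfl

theorem coboundary_cupCoboundaries (ps : List (X → ZMod 2)) :
    coboundary (cupCoboundaries ps) = 0 := by
  cases ps with
  | cons p ps => exact coboundary_coboundary _
  | nil =>
    funext l
    by_cases hl : l.length = 2
    · obtain ⟨a, b, rfl⟩ := List.length_eq_two.mp hl
      simp [coboundary_cons, coboundary_nil, link, cupCoboundaries, CharTwo.add_self_eq_zero]
    · calc coboundary (cupCoboundaries []) l
          = coboundary 0 l := coboundary_congr fun m _ hm => if_neg (by lia)
        _ = 0 := by rw [map_zero, Pi.zero_apply]

theorem cupCoboundaries_eq_zero_of_const {ps : List (X → ZMod 2)} {p : X → ZMod 2} (hp : p ∈ ps)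
    {l : List X} {c : ZMod 2} (hc : ∀ x ∈ l, p x = c) : cupCoboundaries ps l = 0 := by
  induction ps generalizing l with
  | nil => simp at hp
  | cons q ps ih =>
    rcases List.mem_cons.mp hp with rfl | hp
    · calc coboundary (vertexCup p (cupCoboundaries ps)) l
          = coboundary (c • cupCoboundaries ps) l := coboundary_congr fun m hm _ => by
            cases m with
            | nil => simp [vertexCup, cupCoboundaries_nil_right]
            | cons v m => simp [vertexCup, hc v (hm.subset List.mem_cons_self)]
        _ = 0 := by rw [map_smul, coboundary_cupCoboundaries, smul_zero, Pi.zero_apply]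
    · calc coboundary (vertexCup q (cupCoboundaries ps)) l
          = coboundary 0 l := coboundary_congr fun m hm _ => by
            cases m with
            | nil => rfl
            | cons v m => simp [vertexCup, ih hp fun x hx => hc x (hm.subset hx)]
        _ = 0 := by rw [map_zero, Pi.zero_apply]

theorem vertexCup_map {σ : X → X} {p : X → ZMod 2} {F : Cochain X} {l : List X}
    (hF₀ : F [] = 0) (hF : F (l.map σ) = F l) (hp : ∀ x ∈ l, p (σ x) = p x + 1) :
    vertexCup p F (l.map σ) = vertexCup p F l + F l := by
  cases l with
  | nil => simp [vertexCup, hF₀]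
  | cons v l =>
    rw [List.map_cons] at hF ⊢
    rw [vertexCup, vertexCup, hF, hp v List.mem_cons_self, add_mul, one_mul]

theorem cupCoboundaries_map {σ : X → X} {ps : List (X → ZMod 2)} {l : List X}
    (hσ : ∀ p ∈ ps, ∀ x ∈ l, p (σ x) = p x + 1) :
    cupCoboundaries ps (l.map σ) = cupCoboundaries ps l := by
  induction ps generalizing l with
  | nil => simp [cupCoboundaries]
  | cons p ps ih =>
    set W := cupCoboundaries ps
    calc coboundary (vertexCup p W) (l.map σ)
        = coboundary (vertexCup p W ∘ List.map σ) l :=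
          (congrFun (coboundary_comp_map σ (vertexCup p W)) l).symm
      _ = coboundary (vertexCup p W + W) l := coboundary_congr fun m hm _ =>
          vertexCup_map (cupCoboundaries_nil_right ps)
            (ih fun q hq x hx => hσ q (List.mem_cons_of_mem p hq) x (hm.subset hx))
            fun x hx => hσ p List.mem_cons_self x (hm.subset hx)
      _ = coboundary (vertexCup p W) l := by
          rw [map_add, coboundary_cupCoboundaries, add_zero]

end Cochains

section Barycenter

variable {E : Type*} [NormedAddCommGroup E] [NormedSpace ℝ E]

/-- The barycenter of the vertices of a simplex. -/
noncomputable def barycenter (l : List E) : E := (l.length : ℝ)⁻¹ • l.sum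

theorem barycenter_singleton (x : E) : barycenter [x] = x := by simp [barycenter]

theorem barycenter_map_neg (l : List E) : barycenter (l.map Neg.neg) = -barycenter l := by
  rw [barycenter, barycenter, List.length_map, ← List.sum_neg, smul_neg]

theorem barycenter_mem {C : Set E} (hC : Convex ℝ C) {l : List E} (hl : l ≠ [])
    (hlC : ∀ x ∈ l, x ∈ C) : barycenter l ∈ C := by
  have hpos : (0 : ℝ) < l.length := mod_cast List.length_pos_of_ne_nil hl
  have hsum : barycenter l = ∑ i : Fin l.length, (l.length : ℝ)⁻¹ • l[i] := by
    rw [← Finset.smul_sum, barycenter]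
    exact congrArg _ (Fin.sum_univ_getElem l).symm
  rw [hsum]
  exact hC.sum_mem (fun _ _ => by positivity) (by simp [hpos.ne'])
    fun i _ => hlC _ (List.getElem_mem i.isLt)

theorem norm_sum_sub_smul_le {l : List E} {w : E} {D : ℝ} (h : ∀ v ∈ l, dist v w ≤ D) :
    ‖l.sum - (l.length : ℝ) • w‖ ≤ l.length * D := by
  induction l with
  | nil => simp
  | cons v l ih =>
    obtain ⟨hv, hl⟩ := List.forall_mem_cons.mp h
    calc ‖(v :: l).sum - ((v :: l).length : ℝ) • w‖
        = ‖(v - w) + (l.sum - (l.length : ℝ) • w)‖ := by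
          congr 1
          simp only [List.sum_cons, List.length_cons, Nat.cast_add, Nat.cast_one]
          module
      _ ≤ D + l.length * D := norm_add_le_of_le (dist_eq_norm v w ▸ hv) (ih hl)
      _ = (v :: l).length * D := by push_cast [List.length_cons]; ring

theorem dist_barycenter_le {l : List E} {w : E} {D : ℝ} {n : ℕ} (hw : w ∈ l)
    (hn : l.length ≤ n + 1) (h : ∀ v ∈ l, dist v w ≤ D) :
    dist (barycenter l) w ≤ n / (n + 1) * D := by
  classical
  have hD : 0 ≤ D := dist_nonneg.trans (h w hw)
  have hperm := List.perm_cons_erase hw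
  set r := l.erase w
  have hlen : l.length = r.length + 1 := by simpa using hperm.length_eq
  have hsum : l.sum = w + r.sum := by simpa using hperm.sum_eq
  have hrn : (r.length : ℝ) ≤ n := mod_cast (by lia : r.length ≤ n)
  -- The vertex `w` itself contributes nothing to the average displacement.
  calc dist (barycenter l) w
      = ‖(r.length + 1 : ℝ)⁻¹ • (r.sum - (r.length : ℝ) • w)‖ := by
        have hr : (r.length + 1 : ℝ) ≠ 0 := by positivity
        rw [dist_eq_norm, barycenter, hsum, hlen]
        push_cast
        congr 1
        match_scalars <;> field_simp
        ring
    _ ≤ (r.length + 1 : ℝ)⁻¹ * (r.length * D) := by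
        rw [norm_smul, Real.norm_of_nonneg (by positivity)]
        gcongr
        exact norm_sum_sub_smul_le fun v hv => h v (List.mem_of_mem_erase hv)
    _ = r.length / (r.length + 1) * D := by ring
    _ ≤ n / (n + 1) * D := by
        refine mul_le_mul_of_nonneg_right ?_ hD
        rw [div_le_div_iff₀ (by positivity) (by positivity)]
        linarith

end Barycenter

section SmallSimplices

variable {X : Type*} [PseudoMetricSpace X]

/-- The simplex `l` has its vertices in `C` and diameter at most `r`. -/
def IsSmallIn (C : Set X) (r : ℝ) (l : List X) : Prop :=
  (∀ x ∈ l, x ∈ C) ∧ ∀ x ∈ l, ∀ y ∈ l, dist x y ≤ r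

theorem IsSmallIn.mono {C C' : Set X} {r : ℝ} {l l' : List X} (h : IsSmallIn C r l)
    (hl : l' ⊆ l) (hC : C ⊆ C') : IsSmallIn C' r l' :=
  ⟨fun _ hx => hC (h.1 _ (hl hx)), fun _ hx _ hy => h.2 _ (hl hx) _ (hl hy)⟩

theorem IsSmallIn.cons {C : Set X} {b : X} {r : ℝ} {l : List X}
    (h : IsSmallIn (C ∩ Metric.closedBall b r) r l) (hb : b ∈ C) (hr : 0 ≤ r) :
    IsSmallIn C r (b :: l) := by
  refine ⟨List.forall_mem_cons.mpr ⟨hb, fun x hx => (h.1 x hx).1⟩, ?_⟩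
  refine List.forall_mem_cons.mpr ⟨List.forall_mem_cons.mpr ⟨by rwa [dist_self], fun y hy => ?_⟩,
    fun x hx => List.forall_mem_cons.mpr ⟨(h.1 x hx).2, h.2 x hx⟩⟩
  exact Metric.mem_closedBall'.mp (h.1 y hy).2

end SmallSimplices

section Subdivision

variable {E : Type*} [NormedAddCommGroup E] [NormedSpace ℝ E]

/-- The transpose of barycentric subdivision: the value on a simplex is the sum of the values on
the top-dimensional simplices of its barycentric subdivision. -/
noncomputable def subdiv (F : Cochain E) : Cochain E
  | [] => F []
  | v :: l => ∑ i : Fin (v :: l).length,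
      subdiv (link (barycenter (v :: l)) F) ((v :: l).eraseIdx i)
  termination_by l => l.length
  decreasing_by rw [List.length_eraseIdx_of_lt i.isLt]; simp

theorem subdiv_nil (F : Cochain E) : subdiv F [] = F [] := by rw [subdiv]

theorem subdiv_cons (F : Cochain E) (v : E) (l : List E) :
    subdiv F (v :: l) = coboundary (subdiv (link (barycenter (v :: l)) F)) (v :: l) := by
  rw [subdiv]; rfl

theorem subdiv_singleton (F : Cochain E) (v : E) : subdiv F [v] = F [v] := by
  rw [subdiv_cons, coboundary_cons, coboundary_nil, add_zero, subdiv_nil, barycenter_singleton,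
    link]

theorem iterate_subdiv_singleton (k : ℕ) (F : Cochain E) (v : E) :
    subdiv^[k] F [v] = F [v] := by
  induction k generalizing F with
  | zero => rfl
  | succ k ih => rw [Function.iterate_succ_apply, ih, subdiv_singleton]

theorem subdiv_add (F G : Cochain E) : subdiv (F + G) = subdiv F + subdiv G := by
  funext l
  induction hl : l.length generalizing l F G with
  | zero => simp [List.length_eq_zero_iff.mp hl, subdiv_nil]
  | succ k ih =>
    obtain ⟨v, l, rfl⟩ := List.exists_cons_of_length_eq_add_one hl
    rw [Pi.add_apply, subdiv_cons, subdiv_cons, subdiv_cons, ← Pi.add_apply, ← map_add]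
    exact coboundary_congr fun m _ hm => ih _ _ m (by lia)

theorem subdiv_coboundary (F : Cochain E) : subdiv (coboundary F) = coboundary (subdiv F) := by
  funext l
  induction hl : l.length generalizing l F with
  | zero => rw [List.length_eq_zero_iff.mp hl, subdiv_nil, coboundary_nil, coboundary_nil]
  | succ k ih =>
    obtain ⟨v, l, rfl⟩ := List.exists_cons_of_length_eq_add_one hl
    set G := link (barycenter (v :: l)) F
    have hG : coboundary (subdiv (coboundary G)) (v :: l) = 0 :=
      calc coboundary (subdiv (coboundary G)) (v :: l)
          = coboundary (coboundary (subdiv G)) (v :: l) :=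
            coboundary_congr fun m _ hm => ih _ m (by lia)
        _ = 0 := congrFun (coboundary_coboundary _) _
    rw [subdiv_cons, link_coboundary, subdiv_add, map_add, Pi.add_apply, hG, add_zero]

theorem subdiv_comp_map_neg (F : Cochain E) :
    subdiv (F ∘ List.map Neg.neg) = subdiv F ∘ List.map Neg.neg := by
  funext l
  induction hl : l.length generalizing l F with
  | zero => simp [List.length_eq_zero_iff.mp hl, subdiv_nil]
  | succ k ih =>
    obtain ⟨v, l, rfl⟩ := List.exists_cons_of_length_eq_add_one hl
    have hlink (b : E) : link b (F ∘ List.map Neg.neg) = link (-b) F ∘ List.map Neg.neg := rfl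
    rw [Function.comp_apply, List.map_cons, subdiv_cons, subdiv_cons, ← List.map_cons,
      barycenter_map_neg, hlink]
    exact (coboundary_congr fun m _ hm => ih _ m (by lia)).trans
      (congrFun (coboundary_comp_map Neg.neg _) (v :: l))

theorem iterate_subdiv_add (k : ℕ) (F G : Cochain E) :
    subdiv^[k] (F + G) = subdiv^[k] F + subdiv^[k] G :=
  Function.Semiconj₂.iterate subdiv_add k F G

theorem iterate_subdiv_zero (k : ℕ) : subdiv^[k] (0 : Cochain E) = 0 := by
  simpa using iterate_subdiv_add k (0 : Cochain E) 0

theorem iterate_subdiv_coboundary (k : ℕ) (F : Cochain E) :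
    subdiv^[k] (coboundary F) = coboundary (subdiv^[k] F) :=
  Function.Commute.iterate_left subdiv_coboundary k F

theorem iterate_subdiv_comp_map_neg (k : ℕ) (F : Cochain E) :
    subdiv^[k] (F ∘ List.map Neg.neg) = subdiv^[k] F ∘ List.map Neg.neg :=
  Function.Commute.iterate_left (g := (· ∘ List.map Neg.neg)) subdiv_comp_map_neg k F

theorem subdiv_congr {n : ℕ} {C : Set E} (hC : Convex ℝ C) {D : ℝ} {F G : Cochain E} {l : List E}
    (hn : l.length ≤ n + 1) (hl : IsSmallIn C D l)
    (hFG : ∀ m, m.length = l.length → IsSmallIn C (n / (n + 1) * D) m → F m = G m) :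
    subdiv F l = subdiv G l := by
  induction hk : l.length generalizing l F G C with
  | zero =>
    obtain rfl := List.length_eq_zero_iff.mp hk
    rw [subdiv_nil, subdiv_nil]
    exact hFG [] rfl (by simp [IsSmallIn])
  | succ k ih =>
    obtain ⟨v, l, rfl⟩ := List.exists_cons_of_length_eq_add_one hk
    set b := barycenter (v :: l)
    set r := (n / (n + 1) : ℝ) * D
    have hD : 0 ≤ D := dist_nonneg.trans (hl.2 v List.mem_cons_self v List.mem_cons_self)
    have hlb : ∀ x ∈ v :: l, x ∈ C ∩ Metric.closedBall b r := fun x hx =>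
      ⟨hl.1 x hx, Metric.mem_closedBall'.mpr
        (dist_barycenter_le hx hn fun y hy => hl.2 y hy x hx)⟩
    rw [subdiv_cons, subdiv_cons]
    refine coboundary_congr fun m hml hm => ih (hC.inter (convex_closedBall b r)) (by lia)
      ⟨fun x hx => hlb x (hml.subset hx), (hl.mono hml.subset subset_rfl).2⟩
      (fun m' hm' hsmall => ?_) (by lia)
    exact hFG (b :: m') (by rw [List.length_cons, hm', hm])
      (hsmall.cons (barycenter_mem hC (List.cons_ne_nil v l) hl.1) (by positivity))

theorem iterate_subdiv_congr {n : ℕ} {C : Set E} (hC : Convex ℝ C) {D : ℝ} {F G : Cochain E}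
    {l : List E} (hn : l.length ≤ n + 1) (hl : IsSmallIn C D l) (k : ℕ)
    (hFG : ∀ m, m.length = l.length → IsSmallIn C ((n / (n + 1)) ^ k * D) m → F m = G m) :
    subdiv^[k] F l = subdiv^[k] G l := by
  induction k generalizing l D with
  | zero => exact hFG l rfl (by simpa using hl)
  | succ k ih =>
    rw [Function.iterate_succ_apply', Function.iterate_succ_apply']
    refine subdiv_congr hC hn hl fun m hm hsmall => ih (hm ▸ hn) hsmall fun m' hm' hsmall' =>
      hFG m' (hm'.trans hm) ?_
    rwa [← mul_assoc, ← pow_succ] at hsmall'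

end Subdivision

theorem exists_linearMap_apply_eq {K V W ι : Type*} [Field K] [AddCommGroup V] [Module K V]
    [AddCommGroup W] [Module K W] {e : ι → V} (he : LinearIndependent K e) (w : ι → W) :
    ∃ φ : V →ₗ[K] W, ∀ i, φ (e i) = w i := by
  obtain ⟨φ, hφ⟩ := ((Module.Basis.span he).constr K w).exists_extend
  refine ⟨φ, fun i => ?_⟩
  calc φ (e i) = φ (Module.Basis.span he i) := by rw [Module.Basis.coe_span_apply]
    _ = (Module.Basis.span he).constr K w (Module.Basis.span he i) := LinearMap.congr_fun hφ _
    _ = w i := Module.Basis.constr_basis _ K w i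

section CrossPolytope

/-- A choice of a sign for each vector of `vs`, that is, a facet of the cross-polytope with
vertices `±v`, `v ∈ vs`. -/
def IsSignChoice {X : Type*} [Neg X] (vs l : List X) : Prop :=
  List.Forall₂ (fun v x => x = v ∨ x = -v) vs l

/-- The mod 2 sum of the values of a cochain on the facets of a cross-polytope. -/
def crossSum {X : Type*} [Neg X] : List X → Cochain X → ZMod 2
  | [], F => F []
  | v :: vs, F => crossSum vs (link v F) + crossSum vs (link (-v) F)

section Neg

variable {X : Type*} [Neg X]

theorem finite_isSignChoice (vs : List X) : {l | IsSignChoice vs l}.Finite := by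
  induction vs with
  | nil => exact (Set.finite_singleton []).subset fun l hl => List.forall₂_nil_left_iff.mp hl
  | cons v vs ih =>
    refine (Set.Finite.image2 List.cons (Set.toFinite {v, -v}) ih).subset fun l hl => ?_
    obtain ⟨x, m, hx, hm, rfl⟩ := List.forall₂_cons_left_iff.mp hl
    exact ⟨x, hx, m, hm, rfl⟩

theorem crossSum_congr {vs : List X} {F G : Cochain X} (h : ∀ l, IsSignChoice vs l → F l = G l) :
    crossSum vs F = crossSum vs G := by
  induction vs generalizing F G with
  | nil => exact h [] List.Forall₂.nil
  | cons v vs ih =>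
    exact congrArg₂ (· + ·) (ih fun l hl => h _ (hl.cons (Or.inl rfl)))
      (ih fun l hl => h _ (hl.cons (Or.inr rfl)))

theorem crossSum_add (vs : List X) (F G : Cochain X) :
    crossSum vs (F + G) = crossSum vs F + crossSum vs G := by
  induction vs generalizing F G with
  | nil => rfl
  | cons v vs ih => exact (congrArg₂ _ (ih _ _) (ih _ _)).trans (add_add_add_comm _ _ _ _)

theorem crossSum_zero (vs : List X) : crossSum vs 0 = 0 := by
  simpa using crossSum_add vs 0 0

theorem crossSum_coboundary (vs : List X) (F : Cochain X) : crossSum vs (coboundary F) = 0 := by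
  induction vs generalizing F with
  | nil => rfl
  | cons v vs ih =>
    rw [crossSum, link_coboundary, link_coboundary, crossSum_add, crossSum_add, ih, ih, add_zero,
      CharTwo.add_self_eq_zero]

theorem crossSum_link_coboundary (vs : List X) (v : X) (F : Cochain X) :
    crossSum vs (link v (coboundary F)) = crossSum vs F := by
  rw [link_coboundary, crossSum_add, crossSum_coboundary, add_zero]

end Neg

theorem crossSum_comp_map_neg {X : Type*} [InvolutiveNeg X] (vs : List X) (F : Cochain X) :
    crossSum vs (F ∘ List.map Neg.neg) = crossSum vs F := by
  induction vs generalizing F with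
  | nil => rfl
  | cons v vs ih =>
    have hlink (x : X) : link x (F ∘ List.map Neg.neg) = link (-x) F ∘ List.map Neg.neg := rfl
    rw [crossSum, crossSum, hlink, hlink, ih, ih, neg_neg, add_comm]

theorem crossSum_cons {X : Type*} [InvolutiveNeg X] (v : X) (vs : List X) (F : Cochain X) :
    crossSum (v :: vs) F = crossSum vs (link v (F + F ∘ List.map Neg.neg)) :=
  calc crossSum vs (link v F) + crossSum vs (link (-v) F)
      = crossSum vs (link v F) + crossSum vs (link (-v) F ∘ List.map Neg.neg) := by
        rw [crossSum_comp_map_neg]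
    _ = crossSum vs (link v (F + F ∘ List.map Neg.neg)) := (crossSum_add vs _ _).symm

variable {E : Type*} [NormedAddCommGroup E] [NormedSpace ℝ E]

/-- The boundary of the cross-polytope with vertices `±v`, `v ∈ vs`. -/
def crossPolytope (vs : List E) : Set E :=
  ⋃ l ∈ {l | IsSignChoice vs l}, convexHull ℝ {x | x ∈ l}

theorem convexHull_subset_crossPolytope {vs l : List E} (hl : IsSignChoice vs l) :
    convexHull ℝ {x | x ∈ l} ⊆ crossPolytope vs :=
  Set.subset_biUnion_of_mem (u := fun l => convexHull ℝ {x | x ∈ l}) hl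

theorem isCompact_crossPolytope (vs : List E) : IsCompact (crossPolytope vs) :=
  (finite_isSignChoice vs).isCompact_biUnion fun l _ => l.finite_toSet.isCompact_convexHull ℝ

theorem crossPolytope_subset_cons (v : E) (vs : List E) :
    crossPolytope vs ⊆ crossPolytope (v :: vs) :=
  Set.iUnion₂_subset fun _ hl =>
    (convexHull_mono fun _ hx => List.mem_cons_of_mem v hx).trans
      (convexHull_subset_crossPolytope (hl.cons (Or.inl rfl)))

theorem zero_notMem_crossPolytope {n : ℕ} {e : Fin n → E} (he : LinearIndependent ℝ e) :
    0 ∉ crossPolytope (List.ofFn e) := by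
  intro h0
  obtain ⟨l, hl, h0l⟩ := Set.mem_iUnion₂.mp h0
  have hlen : l.length = n := hl.length_eq.symm.trans List.length_ofFn
  have hsign (i : Fin n) : ∃ s : ℝ, s * s = 1 ∧ l[i] = s • e i := by
    have hi := (List.forall₂_iff_get.mp hl).2 i (by simp) (by lia)
    simp only [List.get_eq_getElem, List.getElem_ofFn] at hi
    rcases hi with hi | hi
    · exact ⟨1, by simp, by simpa using hi⟩
    · exact ⟨-1, by simp, by simpa using hi⟩
  choose s hs hl_eq using hsign
  obtain ⟨φ, hφe⟩ := exists_linearMap_apply_eq he s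
  have hφl : {x | x ∈ l} ⊆ {x | φ x = 1} := by
    intro x hx
    obtain ⟨i, hi, rfl⟩ := List.mem_iff_getElem.mp hx
    calc φ l[i] = φ (s ⟨i, hlen ▸ hi⟩ • e ⟨i, hlen ▸ hi⟩) := congrArg φ (hl_eq ⟨i, hlen ▸ hi⟩)
      _ = 1 := by rw [map_smul, hφe, smul_eq_mul, hs]
  simpa using convexHull_min hφl (convex_hyperplane φ.isLinear 1) h0l

theorem crossSum_link_iterate_subdiv_congr {v : E} {vs : List E} {F G : Cochain E} {k : ℕ}
    (h : ∀ l, l.length = vs.length + 1 → IsSmallIn (crossPolytope (v :: vs))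
      ((vs.length / (vs.length + 1)) ^ k * Metric.diam (crossPolytope (v :: vs))) l → F l = G l) :
    crossSum vs (link v (subdiv^[k] F)) = crossSum vs (link v (subdiv^[k] G)) := by
  refine crossSum_congr fun l hl => ?_
  have hlen : (v :: l).length = vs.length + 1 := congrArg (· + 1) hl.length_eq.symm
  have hsub := convexHull_subset_crossPolytope (hl.cons (Or.inl rfl) : IsSignChoice (v :: vs) _)
  have hvl : ∀ x ∈ v :: l, x ∈ convexHull ℝ {x | x ∈ v :: l} := subset_convexHull ℝ _
  exact iterate_subdiv_congr (convex_convexHull ℝ _) hlen.le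
    ⟨hvl, fun x hx y hy => Metric.dist_le_diam_of_mem (isCompact_crossPolytope _).isBounded
      (hsub (hvl x hx)) (hsub (hvl y hy))⟩ k
    fun m hm hsmall => h m (hm.trans hlen) (hsmall.mono (List.Subset.refl m) hsub)

theorem crossSum_link_iterate_subdiv_cupCoboundaries {v : E} {vs : List E}
    {ps : List (E → ZMod 2)} (h0 : 0 ∉ crossPolytope (v :: vs)) (hlen : ps.length = vs.length)
    (hodd : ∀ p ∈ ps, ∀ x ≠ 0, p (-x) = p x + 1) (k : ℕ) :
    crossSum vs (link v (subdiv^[k] (cupCoboundaries ps))) = 1 := by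
  induction vs generalizing v ps with
  | nil =>
    obtain rfl := List.length_eq_zero_iff.mp hlen
    exact iterate_subdiv_singleton k _ v
  | cons w ws ih =>
    obtain ⟨p, qs, rfl⟩ := List.exists_cons_of_length_eq_add_one hlen
    have h0' : 0 ∉ crossPolytope (w :: ws) := fun h => h0 (crossPolytope_subset_cons v _ h)
    obtain ⟨hp, hqs⟩ := List.forall_mem_cons.mp hodd
    set W := cupCoboundaries qs
    set U := vertexCup p W
    have hU (l : List E) (hl : ∀ x ∈ l, x ≠ 0) : (U + U ∘ List.map Neg.neg) l = W l :=
      calc U l + U (l.map Neg.neg)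
          = U l + (U l + W l) :=
            congrArg (U l + ·) <| vertexCup_map (cupCoboundaries_nil_right qs)
              (cupCoboundaries_map fun q hq x hx => hqs q hq x (hl x hx))
              fun x hx => hp x (hl x hx)
        _ = W l := CharTwo.add_cancel_left _ _
    calc crossSum (w :: ws) (link v (subdiv^[k] (coboundary U)))
        = crossSum (w :: ws) (subdiv^[k] U) := by
          rw [iterate_subdiv_coboundary, crossSum_link_coboundary]
      _ = crossSum ws (link w (subdiv^[k] (U + U ∘ List.map Neg.neg))) := by
          rw [crossSum_cons, iterate_subdiv_add, iterate_subdiv_comp_map_neg]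
      _ = crossSum ws (link w (subdiv^[k] W)) := crossSum_link_iterate_subdiv_congr
          fun l _ hl => hU l fun x hx => ne_of_mem_of_not_mem (hl.1 x hx) h0'
      _ = 1 := ih h0' (Nat.succ.inj hlen) hqs

end CrossPolytope

section LusternikSchnirelmann

variable {E : Type*} [NormedAddCommGroup E] [NormedSpace ℝ E]

theorem exists_isSmallIn_cupCoboundaries_ne_zero {v : E} {vs : List E} {ps : List (E → ZMod 2)}
    (h0 : 0 ∉ crossPolytope (v :: vs)) (hlen : ps.length = vs.length)
    (hodd : ∀ p ∈ ps, ∀ x ≠ 0, p (-x) = p x + 1) {δ : ℝ} (hδ : 0 < δ) :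
    ∃ l, l.length = vs.length + 1 ∧ IsSmallIn (crossPolytope (v :: vs)) δ l ∧
      cupCoboundaries ps l ≠ 0 := by
  by_contra! hzero
  set q : ℝ := vs.length / (vs.length + 1)
  have hq : q < 1 := (div_lt_one (by positivity)).mpr (lt_add_one _)
  have hlim := (tendsto_pow_atTop_nhds_zero_of_lt_one (by positivity : 0 ≤ q) hq).mul_const
    (Metric.diam (crossPolytope (v :: vs)))
  rw [zero_mul] at hlim
  obtain ⟨k, hk⟩ := (hlim.eventually_lt_const hδ).exists
  refine one_ne_zero (α := ZMod 2) ?_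
  calc 1 = crossSum vs (link v (subdiv^[k] (cupCoboundaries ps))) :=
        (crossSum_link_iterate_subdiv_cupCoboundaries h0 hlen hodd k).symm
    _ = crossSum vs (link v (subdiv^[k] 0)) :=
        crossSum_link_iterate_subdiv_congr fun l hl hsmall =>
          hzero l hl ⟨hsmall.1, fun x hx y hy => (hsmall.2 x hx y hy).trans hk.le⟩
    _ = crossSum vs 0 := by rw [iterate_subdiv_zero]; rfl
    _ = 0 := crossSum_zero vs

theorem exists_odd_extension {X : Type*} [InvolutiveNeg X] {V : Set X} (hV : Disjoint V (-V)) :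
    ∃ p : X → ZMod 2, (∀ x, x ≠ -x → p (-x) = p x + 1) ∧ (∀ x ∈ V, p x = 1) ∧
      ∀ x ∈ -V, p x = 0 := by
  classical
  -- Off `V ∪ -V` a well-order singles out one point of each antipodal pair.
  let S : Set X := {x | x ∈ V ∨ x ∉ -V ∧ WellOrderingRel x (-x)}
  have hS (x : X) (hx : x ≠ -x) : -x ∈ S ↔ x ∉ S := by
    have hdisj : x ∈ V → -x ∉ V := fun h => Set.disjoint_left.mp hV h
    have htri : ¬ WellOrderingRel x (-x) ↔ WellOrderingRel (-x) x :=
      ⟨fun h => ((trichotomous_of WellOrderingRel x (-x)).resolve_left h).resolve_left hx,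
        asymm_of _⟩
    simp only [S, Set.mem_ofPred_eq, Set.mem_neg, neg_neg]
    tauto
  refine ⟨fun x => if x ∈ S then 1 else 0, fun x hx => ?_, fun x hx => if_pos (Or.inl hx),
    fun x hx => if_neg ?_⟩
  · by_cases h : x ∈ S <;> simp [hS x hx, h, CharTwo.add_self_eq_zero]
  · rintro (h | h)
    exacts [Set.disjoint_left.mp hV h hx, h.1 hx]

theorem exists_ne_zero_forall_notMem {n : ℕ} (hn : n < Module.finrank ℝ E) {V : Fin n → Set E}
    (hVo : ∀ i, IsOpen (V i)) (hV : ∀ i, Disjoint (V i) (-V i)) :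
    ∃ x ≠ 0, ∀ i, x ∉ V i ∧ x ∉ -V i := by
  by_contra! hcover
  have : IsAddTorsionFree E := .of_isTorsionFree ℝ E
  obtain ⟨e, he⟩ := exists_linearIndependent_of_le_finrank (Nat.succ_le_of_lt hn)
  have h0 := zero_notMem_crossPolytope he
  rw [List.ofFn_succ] at h0
  choose p hodd hone hzero using fun i => exists_odd_extension (hV i)
  obtain ⟨δ, hδ, hball⟩ := lebesgue_number_lemma_of_metric
    (c := Sum.elim V fun i => -V i) (isCompact_crossPolytope _)
    (Sum.rec hVo fun i => (hVo i).neg) fun x hx => by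
      obtain ⟨i, hi⟩ := hcover x (ne_of_mem_of_not_mem hx h0)
      by_cases hxi : x ∈ V i
      · exact Set.mem_iUnion.mpr ⟨Sum.inl i, hxi⟩
      · exact Set.mem_iUnion.mpr ⟨Sum.inr i, hi hxi⟩
  obtain ⟨l, hl, hsmall, hcup⟩ := exists_isSmallIn_cupCoboundaries_ne_zero (ps := List.ofFn p) h0
    (by simp) (List.forall_mem_ofFn_iff.mpr fun i x hx => hodd i x (self_ne_neg.mpr hx))
    (half_pos hδ)
  obtain ⟨x, m, rfl⟩ := List.exists_cons_of_length_eq_add_one hl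
  have hx := List.mem_cons_self (a := x) (l := m)
  obtain ⟨j, hj⟩ := hball x (hsmall.1 x hx)
  have hlj : ∀ y ∈ x :: m, y ∈ Sum.elim V (fun i => -V i) j := fun y hy =>
    hj ((hsmall.2 y hy x hx).trans_lt (half_lt_self hδ))
  cases j with
  | inl i => exact hcup (cupCoboundaries_eq_zero_of_const (List.mem_ofFn.mpr ⟨i, rfl⟩)
      fun y hy => hone i y (hlj y hy))
  | inr i => exact hcup (cupCoboundaries_eq_zero_of_const (List.mem_ofFn.mpr ⟨i, rfl⟩)
      fun y hy => hzero i y (hlj y hy))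

theorem exists_mem_sphere_forall_notMem {n : ℕ} (hn : n < Module.finrank ℝ E)
    {V : Fin n → Set (Metric.sphere (0 : E) 1)} (hVo : ∀ i, IsOpen (V i))
    (hV : ∀ i, Disjoint (V i) (-V i)) : ∃ u, ∀ i, u ∉ V i ∧ u ∉ -V i := by
  let N : ({0}ᶜ : Set E) → Metric.sphere (0 : E) 1 := fun x => (homeomorphUnitSphereProd E x).1
  have hN : Continuous N := continuous_fst.comp (homeomorphUnitSphereProd E).continuous
  have hNneg {x : E} (hx : x ≠ 0) : N ⟨-x, neg_ne_zero.mpr hx⟩ = -N ⟨x, hx⟩ := by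
    ext
    simp [N]
  obtain ⟨x, hx, hxV⟩ := exists_ne_zero_forall_notMem hn (V := fun i => (↑) '' (N ⁻¹' V i))
    (fun i => isOpen_compl_singleton.isOpenMap_subtype_val _ ((hVo i).preimage hN)) fun i => by
      rw [Set.disjoint_left]
      rintro _ ⟨⟨x, hx⟩, hxV, rfl⟩ ⟨⟨_, hx'⟩, hxV', rfl⟩
      exact Set.disjoint_left.mp (hV i) hxV (Set.mem_neg.mpr (hNneg hx ▸ hxV'))
  refine ⟨N ⟨x, hx⟩, fun i => ⟨fun h => (hxV i).1 ⟨_, h, rfl⟩, fun h => (hxV i).2 ?_⟩⟩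
  exact ⟨⟨-x, neg_ne_zero.mpr hx⟩, by rwa [Set.mem_preimage, hNneg], rfl⟩

end LusternikSchnirelmann

section Spread

variable {X : Type*}

/-- The part of `A` on the nonnegative side of `a`; the part on the other side is
`upperPart A (-a)`. -/
def upperPart (A : Set X) (a : X → ℝ) : Set X := {x ∈ A | 0 ≤ a x}

/-- The difference between the maximum and the minimum of `b` on `S`. -/
noncomputable def spread (b : X → ℝ) (S : Set X) : ℝ := sSup (b '' S) - sInf (b '' S)

/-- The variation of `b` over the part of `A` above `a = 0` strictly exceeds its variation over the
part below. Quantifying over points rather than comparing values of `spread` makes this also hold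
when the part below is empty. -/
def VariesMoreAbove (A : Set X) (a b : X → ℝ) : Prop :=
  ∃ x ∈ upperPart A a, ∃ y ∈ upperPart A a,
    ∀ x' ∈ upperPart A (-a), ∀ y' ∈ upperPart A (-a), b x' - b y' < b x - b y

theorem spread_neg (b : X → ℝ) (S : Set X) : spread (-b) S = spread b S := by
  have himage : (-b) '' S = -(b '' S) := by
    rw [← Set.image_neg_eq_neg, Set.image_image]; rfl
  rw [spread, spread, himage, Real.sSup_neg, Real.sInf_neg]
  ring

theorem mem_upperPart_neg_of_not_pos {A : Set X} {a : X → ℝ} {x : X} (hx : x ∈ A)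
    (h : ¬ 0 < a x) : x ∈ upperPart A (-a) :=
  ⟨hx, neg_nonneg.mpr (not_lt.mp h)⟩

theorem VariesMoreAbove.not_neg {A : Set X} {a b : X → ℝ} (h : VariesMoreAbove A a b) :
    ¬ VariesMoreAbove A (-a) (-b) := by
  rintro ⟨x', hx', y', hy', h'⟩
  obtain ⟨x, hx, y, hy, h⟩ := h
  rw [neg_neg] at h'
  have hlt := h y' hy' x' hx'
  have hgt := h' y hy x hx
  simp only [Pi.neg_apply] at hgt
  linarith

theorem upperPart_nonempty_of_not_variesMoreAbove {A : Set X} (hA : A.Nonempty) {a b : X → ℝ}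
    (h : ¬ VariesMoreAbove A (-a) b) : (upperPart A a).Nonempty := by
  by_contra! hempty
  obtain ⟨z, hz⟩ := hA
  have hzneg : z ∈ upperPart A (-a) :=
    mem_upperPart_neg_of_not_pos hz fun hpos =>
      (Set.eq_empty_iff_forall_notMem.mp hempty z) ⟨hz, hpos.le⟩
  refine h ⟨z, hzneg, z, hzneg, fun x' hx' => ?_⟩
  rw [neg_neg, hempty] at hx'
  exact hx'.elim

theorem exists_pos_of_lt_sub {E : Type*} [AddCommGroup E] [Module ℝ E] {A : Set E}
    (hconv : Convex ℝ A) {a b : E →ᵃ[ℝ] ℝ} {x y z : E} (hx : x ∈ A) (hy : y ∈ A) (hz : z ∈ A)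
    (hax : 0 ≤ a x) (hay : 0 ≤ a y) (haz : 0 < a z) {r : ℝ} (hr : 0 ≤ r) (hrxy : r < b x - b y) :
    ∃ x' ∈ A, ∃ y' ∈ A, 0 < a x' ∧ 0 < a y' ∧ r < b x' - b y' := by
  have hxy : 0 < b x - b y := hr.trans_lt hrxy
  obtain ⟨t, hrt, ht1⟩ := exists_between ((div_lt_one hxy).mpr hrxy)
  have ht0 : 0 < t := (div_nonneg hr hxy.le).trans_lt hrt
  have hline (c : E →ᵃ[ℝ] ℝ) (p : E) : c (AffineMap.lineMap z p t) = (1 - t) * c z + t * c p := by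
    rw [AffineMap.apply_lineMap, AffineMap.lineMap_apply_ring]
  have hmem {p : E} (hp : p ∈ A) : AffineMap.lineMap z p t ∈ A :=
    hconv.lineMap_mem hz hp ⟨ht0.le, ht1.le⟩
  have hpos {p : E} (hp : 0 ≤ a p) : 0 < a (AffineMap.lineMap z p t) := by
    rw [hline]
    exact add_pos_of_pos_of_nonneg (mul_pos (sub_pos.mpr ht1) haz) (mul_nonneg ht0.le hp)
  refine ⟨_, hmem hx, _, hmem hy, hpos hax, hpos hay, ?_⟩
  calc r < t * (b x - b y) := (div_lt_iff₀ hxy).mp hrt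
    _ = b (AffineMap.lineMap z x t) - b (AffineMap.lineMap z y t) := by
      rw [hline, hline]
      ring

variable [TopologicalSpace X]

theorem isCompact_upperPart {A : Set X} (hA : IsCompact A) {a : X → ℝ} (ha : Continuous a) :
    IsCompact (upperPart A a) :=
  hA.inter_right (isClosed_le continuous_const ha)

theorem sub_le_spread {S : Set X} (hS : IsCompact S) {b : X → ℝ} (hb : Continuous b) {x y : X}
    (hx : x ∈ S) (hy : y ∈ S) : b x - b y ≤ spread b S :=
  sub_le_sub (le_csSup (hS.image hb).bddAbove (Set.mem_image_of_mem b hx))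
    (csInf_le (hS.image hb).bddBelow (Set.mem_image_of_mem b hy))

theorem exists_spread_eq_sub {S : Set X} (hS : IsCompact S) (hne : S.Nonempty) {b : X → ℝ}
    (hb : Continuous b) : ∃ x ∈ S, ∃ y ∈ S, spread b S = b x - b y := by
  obtain ⟨x, hx, hmax⟩ := hS.exists_sSup_image_eq hne hb.continuousOn
  obtain ⟨y, hy, hmin⟩ := hS.exists_sInf_image_eq hne hb.continuousOn
  exact ⟨x, hx, y, hy, by rw [spread, hmax, hmin]⟩

theorem spread_upperPart_le {A : Set X} (hA : IsCompact A) {a b : X → ℝ} (ha : Continuous a)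
    (hb : Continuous b) (hne : (upperPart A a).Nonempty) (h : ¬ VariesMoreAbove A a b) :
    spread b (upperPart A a) ≤ spread b (upperPart A (-a)) := by
  by_contra! hlt
  obtain ⟨x, hx, y, hy, hxy⟩ := exists_spread_eq_sub (isCompact_upperPart hA ha) hne hb
  exact h ⟨x, hx, y, hy, fun x' hx' y' hy' => hxy ▸
    (sub_le_spread (isCompact_upperPart hA ha.neg) hb hx' hy').trans_lt hlt⟩

theorem spread_upperPart_eq {A : Set X} (hA : IsCompact A) (hne : A.Nonempty) {a b : X → ℝ}
    (ha : Continuous a) (hb : Continuous b) (h : ¬ VariesMoreAbove A a b)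
    (h' : ¬ VariesMoreAbove A (-a) (-b)) :
    (upperPart A a).Nonempty ∧ (upperPart A (-a)).Nonempty ∧
      spread b (upperPart A a) = spread b (upperPart A (-a)) := by
  have hup := upperPart_nonempty_of_not_variesMoreAbove hne h'
  have hdown := upperPart_nonempty_of_not_variesMoreAbove (a := -a) hne (by rwa [neg_neg])
  refine ⟨hup, hdown, (spread_upperPart_le hA ha hb hup h).antisymm ?_⟩
  simpa only [spread_neg, neg_neg] using spread_upperPart_le hA ha.neg hb.neg hdown h'

theorem VariesMoreAbove.exists_pos {E : Type*} [AddCommGroup E] [Module ℝ E] [TopologicalSpace E]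
    {A : Set E} (hA : IsCompact A) (hconv : Convex ℝ A) {a b : E →ᵃ[ℝ] ℝ} (ha : Continuous a)
    (hb : Continuous b) (hsupp : (∀ x ∈ A, a x ≤ 0) → {x ∈ A | a x = 0}.Subsingleton)
    (h : VariesMoreAbove A a b) :
    ∃ x ∈ A, ∃ y ∈ A, 0 < a x ∧ 0 < a y ∧
      ∀ x' ∈ upperPart A (-a), ∀ y' ∈ upperPart A (-a), b x' - b y' < b x - b y := by
  obtain ⟨x, hx, y, hy, h⟩ := h
  rcases (upperPart A (-a)).eq_empty_or_nonempty with hempty | hne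
  · have hpos : 0 < a x := by
      by_contra hnot
      exact hempty.subset (mem_upperPart_neg_of_not_pos hx.1 hnot)
    exact ⟨x, hx.1, x, hx.1, hpos, hpos, fun x' hx' => (hempty.subset hx').elim⟩
  have hcompact : IsCompact (upperPart A (-a)) := isCompact_upperPart hA ha.neg
  obtain ⟨w, hw⟩ := hne
  obtain ⟨x₁, hx₁, y₁, hy₁, hspread⟩ := exists_spread_eq_sub hcompact ⟨w, hw⟩ hb
  have hgap : spread b (upperPart A (-a)) < b x - b y := hspread ▸ h x₁ hx₁ y₁ hy₁
  have hspread0 : 0 ≤ spread b (upperPart A (-a)) := by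
    simpa using sub_le_spread hcompact hb hw hw
  obtain ⟨z, hz, haz⟩ : ∃ z ∈ A, 0 < a z := by
    by_contra! hle
    obtain rfl := hsupp hle ⟨hx.1, (hle x hx.1).antisymm hx.2⟩ ⟨hy.1, (hle y hy.1).antisymm hy.2⟩
    exact (hspread0.trans_lt hgap).ne' (sub_self _)
  obtain ⟨x₂, hx₂, y₂, hy₂, hax, hay, hgap'⟩ :=
    exists_pos_of_lt_sub hconv hx.1 hy.1 hz hx.2 hy.2 haz hspread0 hgap
  exact ⟨x₂, hx₂, y₂, hy₂, hax, hay, fun x' hx' y' hy' =>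
    (sub_le_spread hcompact hb hx' hy').trans_lt hgap'⟩

theorem isOpen_forall_upperPart_sub_lt {P : Type*} [TopologicalSpace P] {A : Set X}
    (hA : IsCompact A) {g f : P → X → ℝ} (hg : Continuous fun p : P × X => g p.1 p.2)
    (hf : Continuous fun p : P × X => f p.1 p.2) {c : P → ℝ} (hc : Continuous c) :
    IsOpen {u | ∀ x ∈ upperPart A (-g u), ∀ y ∈ upperPart A (-g u), f u x - f u y < c u} := by
  let W : Set (P × X × X) := {p | 0 < g p.1 p.2.1 ∨ 0 < g p.1 p.2.2 ∨
    f p.1 p.2.1 - f p.1 p.2.2 < c p.1}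
  have hfst : Continuous fun p : P × X × X => (p.1, p.2.1) := by fun_prop
  have hsnd : Continuous fun p : P × X × X => (p.1, p.2.2) := by fun_prop
  have hW : IsOpen W := (isOpen_lt continuous_const (hg.comp hfst)).union <|
    (isOpen_lt continuous_const (hg.comp hsnd)).union <|
      isOpen_lt ((hf.comp hfst).sub (hf.comp hsnd)) (hc.comp continuous_fst)
  refine isOpen_iff_mem_nhds.mpr fun u hu => ?_
  have hWu : ∀ p ∈ A ×ˢ A, ∀ᶠ q : P × X × X in 𝓝 (u, p), q ∈ W := fun p hp => hW.mem_nhds <|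
    or_iff_not_imp_left.mpr fun hx => or_iff_not_imp_left.mpr fun hy =>
      hu _ (mem_upperPart_neg_of_not_pos hp.1 hx) _ (mem_upperPart_neg_of_not_pos hp.2 hy)
  filter_upwards [(hA.prod hA).eventually_forall_of_forall_eventually
    (P := fun v p => (v, p) ∈ W) hWu] with v hv x hx y hy
  rcases hv (x, y) ⟨hx.1, hy.1⟩ with h | h | h
  · exact absurd h (not_lt.mpr (neg_nonneg.mp hx.2))
  · exact absurd h (not_lt.mpr (neg_nonneg.mp hy.2))
  · exact h

theorem isOpen_variesMoreAbove {E P : Type*} [AddCommGroup E] [Module ℝ E] [TopologicalSpace E]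
    [TopologicalSpace P] {A : Set E} (hA : IsCompact A) (hconv : Convex ℝ A)
    {g f : P → E →ᵃ[ℝ] ℝ} (hg : Continuous fun p : P × E => g p.1 p.2)
    (hf : Continuous fun p : P × E => f p.1 p.2)
    (hsupp : ∀ u, (∀ x ∈ A, g u x ≤ 0) → {x ∈ A | g u x = 0}.Subsingleton) :
    IsOpen {u | VariesMoreAbove A (g u) (f u)} := by
  have hg' (x : E) : Continuous fun u => g u x := hg.comp (Continuous.prodMk_left x)
  have hf' (x : E) : Continuous fun u => f u x := hf.comp (Continuous.prodMk_left x)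
  refine isOpen_iff_mem_nhds.mpr fun u hu => ?_
  obtain ⟨x, hx, y, hy, hgx, hgy, h⟩ := hu.exists_pos hA hconv
    (hg.comp (Continuous.prodMk_right u)) (hf.comp (Continuous.prodMk_right u)) (hsupp u)
  filter_upwards [(isOpen_lt continuous_const (hg' x)).mem_nhds hgx,
    (isOpen_lt continuous_const (hg' y)).mem_nhds hgy,
    (isOpen_forall_upperPart_sub_lt (g := fun u => g u) (f := fun u => f u) hA hg hf
      ((hf' x).sub (hf' y))).mem_nhds h] with v hvx hvy hv
  exact ⟨x, ⟨hx, hvx.le⟩, y, ⟨hy, hvy.le⟩, hv⟩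

end Spread

section AffineForms

variable {n : ℕ}

/-- The objective `fQ n Q · u` as an affine form. -/
noncomputable def fQAffine (Q : Matrix (Fin n) (Fin n) ℝ) (u : EuclideanSpace ℝ (Fin (n + 1))) :
    EuclideanSpace ℝ (Fin n) →ᵃ[ℝ] ℝ :=
  LinearMap.toAffineMap
    { toFun x := fQ n Q x u
      map_add' x y := by simp [fQ, Matrix.mulVec_add, mul_add, Finset.sum_add_distrib]
      map_smul' c x := by simp [fQ, Matrix.mulVec_smul, Finset.mul_sum, mul_left_comm] }

theorem coe_fQAffine (Q : Matrix (Fin n) (Fin n) ℝ) (u : EuclideanSpace ℝ (Fin (n + 1))) :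
    ⇑(fQAffine Q u) = fun x => fQ n Q x u := rfl

/-- The affine form `x ↦ ⟨u', x⟩ - u_{n+1}`, whose sign distinguishes the two half-spaces bounded by
the hyperplane of `u`. -/
noncomputable def height (u : EuclideanSpace ℝ (Fin (n + 1))) :
    EuclideanSpace ℝ (Fin n) →ᵃ[ℝ] ℝ :=
  fQAffine 1 u - AffineMap.const ℝ _ (u (Fin.last n))

theorem height_apply (u : EuclideanSpace ℝ (Fin (n + 1))) (x : EuclideanSpace ℝ (Fin n)) :
    height u x = ∑ i, u (Fin.castSucc i) * x i - u (Fin.last n) := by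
  simp [height, coe_fQAffine, fQ]

theorem upperPart_height (A : Set (EuclideanSpace ℝ (Fin n)))
    (u : EuclideanSpace ℝ (Fin (n + 1))) : upperPart A (height u) = A ∩ Hplus n u := by
  ext x
  simp [upperPart, Hplus, height_apply]

theorem upperPart_neg_height (A : Set (EuclideanSpace ℝ (Fin n)))
    (u : EuclideanSpace ℝ (Fin (n + 1))) : upperPart A (-height u) = A ∩ Hminus n u := by
  ext x
  simp [upperPart, Hminus, height_apply]

theorem odd_fQAffine (Q : Matrix (Fin n) (Fin n) ℝ) : Function.Odd (fQAffine Q) := fun u => by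
  ext x
  simp [coe_fQAffine, fQ]

theorem odd_height : Function.Odd (height (n := n)) := fun u => by
  ext x
  simp [height_apply, neg_add_eq_sub]

theorem continuous_fQ (Q : Matrix (Fin n) (Fin n) ℝ) :
    Continuous fun p : EuclideanSpace ℝ (Fin (n + 1)) × EuclideanSpace ℝ (Fin n) =>
      fQ n Q p.2 p.1 := by
  unfold fQ Matrix.mulVec dotProduct
  fun_prop

theorem continuous_height :
    Continuous fun p : EuclideanSpace ℝ (Fin (n + 1)) × EuclideanSpace ℝ (Fin n) =>
      height p.1 p.2 := by
  simp only [height_apply]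
  fun_prop

theorem subsingleton_height_eq_zero {A : Set (EuclideanSpace ℝ (Fin n))}
    (hstrict : ∀ (v : EuclideanSpace ℝ (Fin n)) (c : ℝ), v ≠ 0 →
      (∀ y ∈ A, (∑ j : Fin n, v j * y j) ≤ c) →
      ({y ∈ A | (∑ j : Fin n, v j * y j) = c}).Subsingleton)
    {u : EuclideanSpace ℝ (Fin (n + 1))} (hu : u ≠ 0) (hle : ∀ x ∈ A, height u x ≤ 0) :
    {x ∈ A | height u x = 0}.Subsingleton := by
  simp only [height_apply, sub_nonpos, sub_eq_zero] at hle ⊢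
  by_cases hv : (WithLp.toLp 2 fun i => u (Fin.castSucc i) : EuclideanSpace ℝ (Fin n)) = 0
  · have hu' (i : Fin n) : u (Fin.castSucc i) = 0 := congrArg (fun v => v i) hv
    rintro x ⟨-, hx⟩
    refine absurd ?_ hu
    ext i
    refine Fin.lastCases ?_ hu' i
    simpa [hu'] using hx.symm
  · exact hstrict _ _ hv hle

end AffineForms

end BorsukUlam

open BorsukUlam

theorem borsuk_ulam_nlp_bilinear_general {E F : Type*} [AddCommGroup E] [Module ℝ E]
    [TopologicalSpace E] [NormedAddCommGroup F] [NormedSpace ℝ F] {n : ℕ}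
    (hn : n < Module.finrank ℝ F) {A : Fin n → Set E} (hne : ∀ i, (A i).Nonempty)
    (hcomp : ∀ i, IsCompact (A i)) (hconv : ∀ i, Convex ℝ (A i))
    {g f : Fin n → Metric.sphere (0 : F) 1 → E →ᵃ[ℝ] ℝ}
    (hg : ∀ i, Continuous fun p : Metric.sphere (0 : F) 1 × E => g i p.1 p.2)
    (hf : ∀ i, Continuous fun p : Metric.sphere (0 : F) 1 × E => f i p.1 p.2)
    (hg_odd : ∀ i, Function.Odd (g i)) (hf_odd : ∀ i, Function.Odd (f i))
    (hsupp : ∀ i u, (∀ x ∈ A i, g i u x ≤ 0) → {x ∈ A i | g i u x = 0}.Subsingleton) :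
    ∃ u, ∀ i, (upperPart (A i) (g i u)).Nonempty ∧ (upperPart (A i) (-g i u)).Nonempty ∧
      spread (f i u) (upperPart (A i) (g i u)) = spread (f i u) (upperPart (A i) (-g i u)) := by
  let V (i : Fin n) : Set (Metric.sphere (0 : F) 1) := {u | VariesMoreAbove (A i) (g i u) (f i u)}
  have hmem_neg (i u) : u ∈ -V i ↔ VariesMoreAbove (A i) (-g i u) (-f i u) := by
    rw [Set.mem_neg, Set.mem_ofPred_eq, hg_odd, hf_odd, AffineMap.coe_neg, AffineMap.coe_neg]
  obtain ⟨u, hu⟩ := exists_mem_sphere_forall_notMem hn (V := V)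
    (fun i => isOpen_variesMoreAbove (hcomp i) (hconv i) (hg i) (hf i) (hsupp i))
    fun i => Set.disjoint_left.mpr fun u h h' => h.not_neg ((hmem_neg i u).mp h')
  exact ⟨u, fun i => spread_upperPart_eq (hcomp i) (hne i)
    ((hg i).comp (Continuous.prodMk_right u)) ((hf i).comp (Continuous.prodMk_right u))
    (hu i).1 (mt (hmem_neg i u).mpr (hu i).2)⟩

theorem borsuk_ulam_nlp_bilinear (n : ℕ) (A : Fin n → Set (EuclideanSpace ℝ (Fin n)))
    (hne : ∀ i, (A i).Nonempty) (hcomp : ∀ i, IsCompact (A i)) (hconv : ∀ i, Convex ℝ (A i))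
    (hint : ∀ i, (interior (A i)).Nonempty)
    (hstrict : ∀ i (v : EuclideanSpace ℝ (Fin n)) (c : ℝ), v ≠ 0 →
      (∀ y ∈ A i, (∑ j : Fin n, v j * y j) ≤ c) →
      ({y ∈ A i | (∑ j : Fin n, v j * y j) = c}).Subsingleton)
    (Q : Fin n → Matrix (Fin n) (Fin n) ℝ) (hQ : ∀ i, (Q i).det ≠ 0) :
    ∃ u ∈ Metric.sphere (0 : EuclideanSpace ℝ (Fin (n + 1))) 1, ∀ i : Fin n,
      (A i ∩ Hplus n u).Nonempty ∧ (A i ∩ Hminus n u).Nonempty ∧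
        sSup ((fun x => fQ n (Q i) x u) '' (A i ∩ Hplus n u)) -
            sInf ((fun x => fQ n (Q i) x u) '' (A i ∩ Hplus n u)) =
          sSup ((fun x => fQ n (Q i) x u) '' (A i ∩ Hminus n u)) -
            sInf ((fun x => fQ n (Q i) x u) '' (A i ∩ Hminus n u)) := by
  obtain ⟨u, hu⟩ := borsuk_ulam_nlp_bilinear_general (F := EuclideanSpace ℝ (Fin (n + 1)))
    (by simp) hne hcomp hconv (g := fun _ u => height u) (f := fun i u => fQAffine (Q i) u)
    (fun _ => continuous_height.comp (continuous_subtype_val.prodMap continuous_id))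
    (fun i => (continuous_fQ (Q i)).comp (continuous_subtype_val.prodMap continuous_id))
    (fun _ => odd_height.comp_odd coe_neg_sphere)
    (fun i => (odd_fQAffine (Q i)).comp_odd coe_neg_sphere)
    (fun i u => subsingleton_height_eq_zero (hstrict i) (ne_zero_of_mem_unit_sphere u))
  refine ⟨u, u.2, fun i => ?_⟩
  simpa only [upperPart_height, upperPart_neg_height, spread, coe_fQAffine] using hu i
end
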